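/- Let w ∈ F_2. Suppose that for every prime p there exists n_0 such that for all n ≥ n_0 the image of the word map P_{w,p^n}: SL(2,p^n) × SL(2,p^n) → SL(2,p^n) contains every noncentral semisimple element of SL(2,p^n), i.e., every matrix g ∈ SL(2,p^n) with tr(g) ∉ {2, −2}. Then the family of word maps P_{w,q}, with q ranging over all prime powers, is equidistributed. -/

import Mathlib

open Matrix Polynomial

abbrev SL2 (K : Type) [CommRing K] : Type := Matrix.SpecialLinearGroup (Fin 2) K

abbrev PSL2 (K : Type) [CommRing K] : Type := SL2 K ⧸ Subgroup.center (SL2 K)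

/-- Evaluation of a word `w ∈ F₂` at a pair of group elements. -/
def wordEval {G : Type*} [Group G] (w : FreeGroup (Fin 2)) (g₁ g₂ : G) : G :=
  (FreeGroup.lift ![g₁, g₂]) w

/-- The word map `P_{w,G} : G × G → G` for `G = SL(2,K)`. -/
def wordMap (w : FreeGroup (Fin 2)) (K : Type) [CommRing K] :
    SL2 K × SL2 K → SL2 K := fun g => wordEval w g.1 g.2

/-- The point `(tr x, tr xy, tr y)`. -/
def trPoint {K : Type} [CommRing K] (x y : SL2 K) : Fin 3 → K :=
  ![Matrix.trace (x : Matrix (Fin 2) (Fin 2) K),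
    Matrix.trace ((x * y : SL2 K) : Matrix (Fin 2) (Fin 2) K),
    Matrix.trace (y : Matrix (Fin 2) (Fin 2) K)]

/-- `f ∈ ℤ[s,u,t]` is the trace polynomial of the word `w`. -/
def IsTracePolynomial (w : FreeGroup (Fin 2)) (f : MvPolynomial (Fin 3) ℤ) : Prop :=
  ∀ (K : Type) [CommRing K], ∀ x y : SL2 K,
    Matrix.trace ((wordEval w x y : SL2 K) : Matrix (Fin 2) (Fin 2) K) =
      MvPolynomial.eval (trPoint x y) (MvPolynomial.map (Int.castRingHom K) f)

/-- `f : X → Y` is `ε`-equidistributed. -/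
def IsEquidistributed {X Y : Type*} (f : X → Y) (ε : ℝ) : Prop :=
  ∃ Y' : Set Y,
    (1 - ε) * (Nat.card Y) < (Nat.card Y' : ℝ) ∧
    ∀ y ∈ Y',
      |(Nat.card {x : X // f x = y} : ℝ) - (Nat.card X : ℝ) / (Nat.card Y)| <
        ε * (Nat.card X) / (Nat.card Y)

/-- The family of word maps on `SL(2,p^n)` is `p`-equidistributed. -/
def IsPEquidistributed (w : FreeGroup (Fin 2)) (p : ℕ) (hp : p.Prime) : Prop :=
  letI : Fact p.Prime := ⟨hp⟩
  ∃ ε : ℕ → ℝ,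
    Filter.Tendsto (fun n : ℕ => ε (p ^ n)) Filter.atTop (nhds 0) ∧
    ∀ᶠ n : ℕ in Filter.atTop,
      IsEquidistributed (wordMap w (GaloisField p n)) (ε (p ^ n))

/-- The family of word maps on `SL(2,q)`, `q` ranging over all prime powers,
is equidistributed. -/
def IsEquidistributedFamily (w : FreeGroup (Fin 2)) : Prop :=
  ∃ ε : ℕ → ℝ,
    Filter.Tendsto ε Filter.atTop (nhds 0) ∧
    ∀ (p : ℕ) (hp : p.Prime),
      letI : Fact p.Prime := ⟨hp⟩
      ∀ᶠ n : ℕ in Filter.atTop,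
        IsEquidistributed (wordMap w (GaloisField p n)) (ε (p ^ n))

/-- Reduction of an integral polynomial mod `p`. -/
noncomputable def reduceMod (p : ℕ) (P : MvPolynomial (Fin 3) ℤ) : MvPolynomial (Fin 3) (ZMod p) :=
  MvPolynomial.map (Int.castRingHom (ZMod p)) P

/-- `P = h ∘ Q` with `deg Q ≥ 1`, `deg h ≥ 2`. -/
def IsCompositePoly (F : Type) [CommRing F] (P : MvPolynomial (Fin 3) F) : Prop :=
  ∃ (Q : MvPolynomial (Fin 3) F) (h : Polynomial F),
    1 ≤ Q.totalDegree ∧ 2 ≤ h.natDegree ∧ P = Polynomial.aeval Q h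

def IsPComposite (p : ℕ) (P : MvPolynomial (Fin 3) ℤ) : Prop :=
  IsCompositePoly (ZMod p) (reduceMod p P)

/-- `h` is a permutation polynomial of every finite extension of `F_p`. -/
def IsPermAllExt (p : ℕ) (h : Polynomial (ZMod p)) : Prop :=
  ∀ (K : Type) [Field K] [Algebra (ZMod p) K] [Finite K],
    Function.Bijective fun z : K => Polynomial.aeval z h

def IsPSpecial (p : ℕ) (P : MvPolynomial (Fin 3) ℤ) : Prop :=
  IsPComposite p P ∧
    ∃ (Q : MvPolynomial (Fin 3) (ZMod p)) (h : Polynomial (ZMod p)),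
      1 ≤ Q.totalDegree ∧ 2 ≤ h.natDegree ∧
      reduceMod p P = Polynomial.aeval Q h ∧ IsPermAllExt p h

def AlmostNoncomposite (P : MvPolynomial (Fin 3) ℤ) : Prop :=
  ∀ p : ℕ, p.Prime → ¬ IsPComposite p P ∨ IsPSpecial p P

/-- The reduced word `x^{a₁}y^{b₁} ⋯ x^{a_r}y^{b_r}`. -/
def wordOf {r : ℕ} (a b : Fin r → ℤ) : FreeGroup (Fin 2) :=
  (List.ofFn fun i : Fin r =>
    FreeGroup.of (0 : Fin 2) ^ a i * FreeGroup.of (1 : Fin 2) ^ b i).prod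

/-!
The trace of `w`, pulled back along a parametrization of `SL(2) × SL(2)` by products of elementary
matrices, is a polynomial `f` over `𝔽_p` in eight variables whose values over `𝔽_q` omit at most
`±2`. Up to a `p`-power root and a shear, `f` is a monic polynomial `Q` in one of the variables with
`Q' ≠ 0`. The irreducible component of `Q(v) = Q(v')` through the diagonal is again of the form
`G(v) = G(v')`: its defining polynomial, evaluated at `(0, v')`, restricts to an element of its
coordinate ring that is integral over the functions of `v` and thus determined on the diagonal. As
`G(v) - G(v')` divides `Q(v) - Q(v')`, `f` is a function of `G`. Stepanov's method, applied to the
sections of `G(v) = G(v')` by lines through a diagonal point, whose smooth rational point provides a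
power series branch, bounds the number of solutions in `𝔽_q^n × 𝔽_q^n` from above by `q^(2n-1) (1 +
O(q^(-1/2)))`. By the second moment `G` is then close to equidistributed, and since `f` takes almost
all values, the function taking `G` to `f` is almost a bijection, so `f` is close to equidistributed
as well. This passes to `w` because the fibers of the word map have the same size over elements of
equal trace different from `±2`, these being conjugate under `GL(2)`.
-/

open scoped PowerSeries

/-! ### Stepanov's auxiliary function -/

section PowerSeriesOrder

variable {K : Type*} [Field K]

open Module

theorem finrank_le_card_of_order_mem (V : Submodule K K⟦X⟧) (O : Finset ℕ)
    (hO : ∀ f ∈ V, f ≠ 0 → ∃ o ∈ O, f.order = o) : finrank K V ≤ O.card := by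
  let coeffs : V →ₗ[K] (O → K) :=
    (LinearMap.pi fun o : O ↦ PowerSeries.coeff (o : ℕ)).comp V.subtype
  have hinj : Function.Injective coeffs := by
    rw [← LinearMap.ker_eq_bot, LinearMap.ker_eq_bot']
    intro f hf
    by_contra hne
    have hf0 : (f : K⟦X⟧) ≠ 0 := fun h ↦ hne (Subtype.ext h)
    obtain ⟨o, ho, hord⟩ := hO f f.2 hf0
    have hcoeff := PowerSeries.coeff_order hf0
    rw [hord, ENat.toNat_natCast] at hcoeff
    exact hcoeff (congrFun hf ⟨o, ho⟩)
  simpa using LinearMap.finrank_le_finrank_of_injective hinj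

/-- The summands have pairwise distinct orders: the one indexed by `i` has its order in
`[N * o i, N * o i + N)`. -/
theorem sum_mul_pow_ne_zero {I : Type*} [Fintype I] {o : I → ℕ} (ho : Function.Injective o)
    {s d : I → K⟦X⟧} {N : ℕ} (hs : ∀ i, (s i).order = o i)
    (hd : ∀ i, d i ≠ 0 → (d i).order < N) (hne : ∃ i, d i ≠ 0) :
    ∑ i, d i * s i ^ N ≠ 0 := by
  classical
  obtain ⟨i₀, hi₀, hmin⟩ :=
    Finset.exists_min_image {i | d i ≠ 0} o (by simpa [Finset.Nonempty] using hne)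
  simp only [Finset.mem_filter, Finset.mem_univ, true_and] at hi₀ hmin
  have horder (i : I) : (d i * s i ^ N).order = (d i).order + (N * o i : ℕ) := by
    rw [PowerSeries.order_mul, PowerSeries.order_pow, hs, nsmul_eq_mul, Nat.cast_mul]
  have hlt (i : I) (hi : i ≠ i₀) : (d i₀ * s i₀ ^ N).order < (d i * s i ^ N).order := by
    rw [horder, horder]
    rcases eq_or_ne (d i) 0 with hdi | hdi
    · rw [hdi, PowerSeries.order_zero, top_add]
      exact WithTop.add_lt_top.2 ⟨(hd i₀ hi₀).trans_le le_top, ENat.natCast_lt_top _⟩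
    · have hsucc : o i₀ + 1 ≤ o i := lt_of_le_of_ne (hmin i hdi) (ho.ne hi.symm)
      calc (d i₀).order + (N * o i₀ : ℕ)
          < N + (N * o i₀ : ℕ) :=
            (ENat.add_lt_add_iff_right (ENat.natCast_ne_top _)).2 (hd i₀ hi₀)
        _ = (N * (o i₀ + 1) : ℕ) := by push_cast; ring
        _ ≤ (N * o i : ℕ) := by exact_mod_cast Nat.mul_le_mul_left N hsucc
        _ ≤ (d i).order + (N * o i : ℕ) := le_add_self
  have hterm : d i₀ * s i₀ ^ N ≠ 0 := by
    refine mul_ne_zero hi₀ (pow_ne_zero _ fun h ↦ ?_)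
    simpa [h] using hs i₀
  intro hsum
  have hcoeff := congrArg (PowerSeries.coeff (d i₀ * s i₀ ^ N).order.toNat) hsum
  rw [map_sum, Finset.sum_eq_single_of_mem i₀ (Finset.mem_univ _), map_zero] at hcoeff
  · exact PowerSeries.coeff_order hterm hcoeff
  · intro i _ hi
    refine PowerSeries.coeff_of_lt_order _ ?_
    rw [PowerSeries.coe_toNat_order hterm]
    exact hlt i hi

end PowerSeriesOrder

/-- A multiplicative filtration of a `K`-algebra by subspaces whose dimensions grow linearly with
slope `e`, up to the defect `c`. The model is `m ↦ L(m • D)` on the affine curve obtained by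
removing an effective divisor `D` of degree `e` from a projective curve. -/
structure LinearGrowthFiltration (K R : Type*) [Field K] [CommRing R] [Algebra K R]
    (e c : ℕ) where
  /-- The `m`-th subspace. -/
  space : ℕ → Submodule K R
  mono : Monotone space
  one_mem : 1 ∈ space 0
  mul_mem {a b : ℕ} {x y : R} : x ∈ space a → y ∈ space b → x * y ∈ space (a + b)
  exists_mem (x : R) : ∃ m, x ∈ space m
  finiteDimensional (m : ℕ) : FiniteDimensional K (space m)
  le_finrank (m : ℕ) : e * (m + 1) ≤ Module.finrank K (space m) + c
  finrank_le (m : ℕ) : Module.finrank K (space m) ≤ e * (m + 1)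

namespace LinearGrowthFiltration

open Module

variable {K R : Type*} [Field K] [CommRing R] [Algebra K R] {e c : ℕ}
  (F : LinearGrowthFiltration K R e c)

theorem pow_mem {a : ℕ} {x : R} (hx : x ∈ F.space a) (n : ℕ) : x ^ n ∈ F.space (a * n) := by
  induction n with
  | zero => simpa using F.one_mem
  | succ n ih => rw [pow_succ, Nat.mul_succ]; exact F.mul_mem ih hx

theorem slope_pos [Nontrivial R] (F : LinearGrowthFiltration K R e c) : 0 < e := by
  have := F.finiteDimensional 0
  have : Nontrivial (F.space 0) :=
    ⟨0, ⟨1, F.one_mem⟩, fun h ↦ zero_ne_one (congrArg Subtype.val h)⟩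
  have := F.finrank_le 0
  have : 0 < finrank K (F.space 0) := finrank_pos
  lia

variable {m : ℕ} {g : R}

theorem card_le_of_surjective [IsDomain R] {ν : Type*} [Fintype ν] (hg0 : g ≠ 0)
    (hg : g ∈ F.space m) {ψ : R →ₗ[K] (ν → K)} (hψ : Function.Surjective ψ)
    (hψg : ∀ r, ψ (g * r) = 0) :
    Fintype.card ν ≤ e * m + c := by
  classical
  choose r hr using fun i : ν ↦ hψ (Pi.single i 1)
  choose M₀ hM₀ using fun i ↦ F.exists_mem (r i)
  let M := Finset.univ.sup M₀
  have hrM (i : ν) : r i ∈ F.space (M + m) :=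
    F.mono ((Finset.le_sup (Finset.mem_univ i)).trans (Nat.le_add_right M m)) (hM₀ i)
  have := F.finiteDimensional (M + m)
  let ψM : F.space (M + m) →ₗ[K] (ν → K) := ψ.comp (F.space (M + m)).subtype
  have hrange : LinearMap.range ψM = ⊤ := by
    refine LinearMap.range_eq_top.2 fun v ↦ ⟨∑ i, v i • ⟨r i, hrM i⟩, ?_⟩
    ext j
    simp [ψM, hr, Pi.single_apply]
  let mulG : F.space M →ₗ[K] LinearMap.ker ψM :=
    { toFun x := ⟨⟨g * x, add_comm m M ▸ F.mul_mem hg x.2⟩, hψg x⟩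
      map_add' x y := by ext; simp [mul_add]
      map_smul' a x := by ext; simp }
  have hmulG : Function.Injective mulG := fun x y hxy ↦
    Subtype.ext (mul_left_cancel₀ hg0
      (congrArg (fun z : LinearMap.ker ψM ↦ ((z : F.space (M + m)) : R)) hxy))
  have hrank := LinearMap.finrank_range_add_finrank_ker ψM
  rw [hrange, finrank_top, Module.finrank_fintype_fun_eq_card] at hrank
  have hker := LinearMap.finrank_le_finrank_of_injective hmulG
  have hlow := F.le_finrank M
  have hup := F.finrank_le (M + m)
  have : e * (M + m + 1) = e * (M + 1) + e * m := by ring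
  lia

theorem order_le [IsDomain R] {ι : R →ₐ[K] K⟦X⟧} {t : R} (ht : ι t = PowerSeries.X) (hg0 : g ≠ 0)
    (hg : g ∈ F.space m) : (ι g).order ≤ (e * m + c : ℕ) := by
  by_contra! hlt
  let ψ : R →ₗ[K] (Fin (e * m + c + 1) → K) :=
    LinearMap.pi fun i ↦ (PowerSeries.coeff (i : ℕ)).comp ι.toLinearMap
  have hψ : Function.Surjective ψ := fun v ↦ by
    refine ⟨∑ i, v i • t ^ (i : ℕ), ?_⟩
    ext j
    simp [ψ, ht, PowerSeries.coeff_X_pow, Fin.val_inj]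
  have hψg (r : R) : ψ (g * r) = 0 := by
    ext j
    refine PowerSeries.coeff_of_lt_order (j : ℕ) ?_
    change _ < (ι (g * r)).order
    rw [map_mul, PowerSeries.order_mul]
    exact ((Nat.cast_le.2 (Nat.lt_succ_iff.1 j.2)).trans_lt hlt).trans_le le_self_add
  have := F.card_le_of_surjective hg0 hg hψ hψg
  simp at this

theorem card_algHom_le [IsDomain R] {ν : Type*} [Fintype ν] (hg0 : g ≠ 0) (hg : g ∈ F.space m)
    {φ : ν → R →ₐ[K] K} (hφ : Function.Injective φ) (hφg : ∀ i, φ i g = 0) :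
    Fintype.card ν ≤ e * m + c := by
  let ψ : R →ₗ[K] (ν → K) := LinearMap.pi fun i ↦ (φ i).toLinearMap
  have hli : LinearIndependent K fun i r ↦ φ i r :=
    ((linearIndependent_algHom_toLinearMap K R K).comp φ hφ).map' (LinearMap.ltoFun K R K K)
      (LinearMap.ker_eq_bot.2 DFunLike.coe_injective)
  have hψ : Function.Surjective ψ := by
    rw [← LinearMap.range_eq_top, ← span_flip_eq_top_iff_linearIndependent.2 hli]
    exact (Submodule.span_eq (LinearMap.range ψ)).symm
  refine F.card_le_of_surjective hg0 hg hψ fun r ↦ ?_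
  ext i
  simp [ψ, hφg]

/-- The relation comes from counting: the additive map `d ↦ ∑ i, (d i) ^ p ^ a * s i` cannot be
injective. -/
theorem exists_frobenius_relation [Nontrivial R] [Finite K] (p : ℕ) [Fact p.Prime] [CharP K p]
    (a l : ℕ) {I : Type*} [Fintype I] {s : I → R} (hs : ∀ i, s i ∈ F.space m)
    (hcard : e * (l * p ^ a + m + 1) < finrank K (F.space l) * Fintype.card I) :
    ∃ d : I → F.space l, d ≠ 0 ∧ ∑ i, (d i : R) ^ p ^ a * s i = 0 := by
  have : CharP R p := charP_of_injective_algebraMap (algebraMap K R).injective p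
  have (j : ℕ) : Fintype (F.space j) := by
    have := F.finiteDimensional j
    have := Module.finite_of_finite K (M := F.space j)
    exact Fintype.ofFinite _
  have := Fintype.ofFinite K
  let Φ : (I → F.space l) →+ F.space (l * p ^ a + m) :=
    { toFun d := ∑ i, ⟨(d i : R) ^ p ^ a * s i, F.mul_mem (F.pow_mem (d i).2 _) (hs i)⟩
      map_zero' := by
        refine Finset.sum_eq_zero fun i _ ↦ Subtype.ext ?_
        simp [(Fact.out : p.Prime).ne_zero]
      map_add' x y := by
        rw [← Finset.sum_add_distrib]
        refine Finset.sum_congr rfl fun i _ ↦ Subtype.ext ?_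
        simp [add_pow_char_pow, add_mul] }
  have hΦ : ¬ Function.Injective Φ := fun hinj ↦ by
    classical
    have hle := Fintype.card_le_of_injective Φ hinj
    rw [Fintype.card_fun, Module.card_eq_pow_finrank (K := K),
      Module.card_eq_pow_finrank (K := K) (V := F.space (l * p ^ a + m)), ← pow_mul,
      Nat.pow_le_pow_iff_right (Fintype.one_lt_card (α := K))] at hle
    exact absurd (hle.trans (F.finrank_le _)) hcard.not_ge
  rw [injective_iff_map_eq_zero] at hΦ
  push Not at hΦ
  obtain ⟨d, hd, hd0⟩ := hΦ
  exact ⟨d, hd0, by simpa [Φ] using congrArg (F.space (l * p ^ a + m)).subtype hd⟩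

theorem exists_orders [IsDomain R] {ι : R →ₐ[K] K⟦X⟧} (hι : Function.Injective ι) {t : R}
    (ht : ι t = PowerSeries.X) (m : ℕ) :
    ∃ O : Finset ℕ, finrank K (F.space m) ≤ O.card ∧
      ∀ o ∈ O, ∃ s ∈ F.space m, (ι s).order = o := by
  classical
  refine ⟨{o ∈ Finset.range (e * m + c + 1) | ∃ s ∈ F.space m, (ι s).order = (o : ℕ)}, ?_,
    fun o ho ↦ (Finset.mem_filter.1 ho).2⟩
  rw [(Submodule.equivMapOfInjective ι.toLinearMap hι (F.space m)).finrank_eq]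
  refine finrank_le_card_of_order_mem _ _ ?_
  rintro _ ⟨s, hs, rfl⟩ hs0
  have hs0' : s ≠ 0 := by rintro rfl; exact hs0 (map_zero _)
  have hord := F.order_le ht hs0' hs
  obtain ⟨o, ho⟩ := ENat.ne_top_iff_exists.1 (hord.trans_lt (ENat.natCast_lt_top _)).ne
  refine ⟨o, Finset.mem_filter.2 ⟨Finset.mem_range.2 ?_, s, hs, ho.symm⟩, ho.symm⟩
  rw [← ho, Nat.cast_le] at hord
  exact Nat.lt_succ_of_le hord

/-- Stepanov's method: on the `K`-points the auxiliary function `∑ i, d i * s i ^ p ^ b` has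
`p ^ a`-th power `∑ i, d i ^ p ^ a * s i = 0`, because raising to the power `p ^ a * p ^ b` is the
identity of `K`. -/
theorem card_le_of_auxiliary [IsDomain R] [Fintype K] {ι : R →ₐ[K] K⟦X⟧}
    (hι : Function.Injective ι) {t : R} (ht : ι t = PowerSeries.X)
    (p : ℕ) [Fact p.Prime] [CharP K p] {a b l m : ℕ} (hq : Fintype.card K = p ^ a * p ^ b)
    (hl : e * l + c < p ^ b)
    (hpigeon : e * (l * p ^ a + m + 1) < finrank K (F.space l) * finrank K (F.space m))
    {ν : Type*} [Fintype ν] {φ : ν → R →ₐ[K] K} (hφ : Function.Injective φ) :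
    Fintype.card ν ≤ e * (l + m * p ^ b) + c := by
  obtain ⟨O, hcard, hO⟩ := F.exists_orders hι ht m
  choose s hs hord using fun o : O ↦ hO o o.2
  obtain ⟨d, hd0, hrel⟩ := F.exists_frobenius_relation p a l hs <|
    hpigeon.trans_le (by rw [Fintype.card_coe]; gcongr)
  let h : R := ∑ i, (d i : R) * s i ^ p ^ b
  have hh : h ∈ F.space (l + m * p ^ b) :=
    Submodule.sum_mem _ fun i _ ↦ F.mul_mem (d i).2 (F.pow_mem (hs i) _)
  have hh0 : h ≠ 0 := fun h0 ↦ by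
    have hι0 (x : R) : ι x ≠ 0 ↔ x ≠ 0 := (map_ne_zero_iff ι hι)
    refine sum_mul_pow_ne_zero (d := fun i ↦ ι (d i)) (N := p ^ b) Subtype.val_injective hord
      (fun i hi ↦ ?_) ?_ (by simpa [h] using congrArg ι h0)
    · exact (F.order_le ht ((hι0 _).1 hi) (d i).2).trans_lt (by exact_mod_cast hl)
    · obtain ⟨i, hi⟩ := Function.ne_iff.1 hd0
      exact ⟨i, (hι0 _).2 fun h ↦ hi (Subtype.ext h)⟩
  refine F.card_algHom_le hh0 hh hφ fun i ↦ ?_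
  refine pow_eq_zero_iff (pow_ne_zero a (Fact.out : p.Prime).ne_zero) |>.1 ?_
  calc φ i h ^ p ^ a = φ i (∑ j, (d j : R) ^ p ^ a * s j) := by
        simp only [h, map_sum, sum_pow_char_pow, map_mul, map_pow, mul_pow, ← pow_mul,
          mul_comm (p ^ b), ← hq, FiniteField.pow_card]
    _ = 0 := by rw [hrel, map_zero]

/-- The parameters `l ≈ B / e` and `m ≈ P / e + 2 * c` balance the two inequalities. -/
theorem exists_stepanov_parameters (he : 0 < e) {P B : ℕ} (hPB : P ≤ B)
    (hP : (2 * c + 1) * (e * (2 * c + 4)) + c + e + 1 ≤ P) :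
    ∃ l m : ℕ, e * l + c < B ∧
      e * (l * P + m + 1) < finrank K (F.space l) * finrank K (F.space m) ∧
      e * (l + m * B) + c ≤ P * B + B * (1 + e * (2 * c + 4)) := by
  have hcP : c + 1 ≤ P := le_trans (by lia) hP
  set l := (B - c - 1) / e with hl
  set u := P / e with hu
  have hel : e * l ≤ B - c - 1 := Nat.mul_div_le _ _
  have hel' : B - c - 1 < e * (l + 1) := Nat.lt_mul_div_succ _ he
  have heu : e * u ≤ P := Nat.mul_div_le _ _
  have heu' : P < e * (u + 1) := Nat.lt_mul_div_succ _ he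
  have helB : e * l + c + 1 ≤ B := by lia
  have hlow : B ≤ e * (l + 1) + c := by lia
  refine ⟨l, u + (2 * c + 3), by lia, ?_, by nlinarith [Nat.mul_le_mul_right B heu]⟩
  have hd := F.le_finrank l
  have hd' := F.le_finrank (u + (2 * c + 3))
  generalize finrank K (F.space l) = d at *
  generalize finrank K (F.space (u + (2 * c + 3))) = d' at *
  zify at *
  set E : ℤ := e * (2 * c + 4) with hE
  set L : ℤ := e * (l + 1) with hL
  set A : ℤ := E - e - c + 1 with hA
  have hE4 : (2 * c + 4 : ℤ) ≤ E := by nlinarith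
  have hA0 : 0 ≤ A := by nlinarith
  have hLP : (P - 2 * c : ℤ) ≤ L - c := by linarith
  calc (e * (l * P + (u + (2 * c + 3)) + 1) : ℤ)
      = (L - e) * P + e * u + E := by rw [hL, hE]; ring
    _ ≤ (L - e) * P + P + E := by linarith
    _ < (L - e) * P + P + E + ((E - 2 * c) * P - 2 * c * A - E) := by nlinarith
    _ = (L - c) * P + A * (P - 2 * c) := by rw [hA]; ring
    _ ≤ (L - c) * P + A * (L - c) := by gcongr
    _ = (L - c) * (P + A) := by ring
    _ ≤ d * d' := mul_le_mul (by linarith) (by nlinarith) (by linarith) (by linarith)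

/-- The Stepanov–Bombieri bound, with an error `O(√q)` when `p ^ b` has size `O(√q)`. -/
theorem card_le [IsDomain R] [Fintype K] (F : LinearGrowthFiltration K R e c)
    {ι : R →ₐ[K] K⟦X⟧} (hι : Function.Injective ι) {t : R}
    (ht : ι t = PowerSeries.X) (p : ℕ) [Fact p.Prime] [CharP K p] {a b : ℕ}
    (hq : Fintype.card K = p ^ a * p ^ b) (hab : p ^ a ≤ p ^ b)
    (ha : (2 * c + 1) * (e * (2 * c + 4)) + c + e + 1 ≤ p ^ a)
    {ν : Type*} [Fintype ν] {φ : ν → R →ₐ[K] K} (hφ : Function.Injective φ) :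
    Fintype.card ν ≤ Fintype.card K + p ^ b * (1 + e * (2 * c + 4)) := by
  obtain ⟨l, m, hl, hpigeon, hbound⟩ := F.exists_stepanov_parameters F.slope_pos hab ha
  exact hq ▸ (F.card_le_of_auxiliary hι ht p hq hl hpigeon hφ).trans hbound

end LinearGrowthFiltration

/-! ### Rational points on a plane curve with a power series branch -/

section WeightedSpan

variable {K R : Type*} [Field K] [CommRing R] [Algebra K R]

/-- The span of the monomials `x ^ i * y ^ j` of weight at most `m`, where `x` has weight `1` and
`y` has weight `D`. It is the `m`-th piece of the filtration used on the curve traced by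
`(x, y)`. -/
def weightedSpan (x y : R) (D m : ℕ) : Submodule K R :=
  Submodule.span K {r | ∃ i j, i + D * j ≤ m ∧ x ^ i * y ^ j = r}

variable {x y : R} {D : ℕ}

theorem pow_mul_pow_mem_weightedSpan {i j m : ℕ} (h : i + D * j ≤ m) :
    x ^ i * y ^ j ∈ weightedSpan (K := K) x y D m :=
  Submodule.subset_span ⟨i, j, h, rfl⟩

theorem weightedSpan_mono : Monotone (weightedSpan (K := K) x y D) := fun _ _ h ↦
  Submodule.span_mono fun _ ⟨i, j, hij, hr⟩ ↦ ⟨i, j, hij.trans h, hr⟩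

theorem mul_mem_weightedSpan {a b : ℕ} {r s : R} (hr : r ∈ weightedSpan (K := K) x y D a)
    (hs : s ∈ weightedSpan (K := K) x y D b) :
    r * s ∈ weightedSpan (K := K) x y D (a + b) := by
  have hmul := Submodule.mul_mem_mul hr hs
  rw [weightedSpan, weightedSpan, Submodule.span_mul_span] at hmul
  refine Submodule.span_mono ?_ hmul
  rintro _ ⟨_, ⟨i, j, hij, rfl⟩, _, ⟨i', j', hij', rfl⟩, rfl⟩
  exact ⟨i + i', j + j', by lia, by ring⟩

theorem exists_mem_weightedSpan (h : Submodule.span K {r | ∃ i j, x ^ i * y ^ j = r} = ⊤) (r : R) :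
    ∃ m, r ∈ weightedSpan (K := K) x y D m := by
  have hr : r ∈ Submodule.span K {r | ∃ i j, x ^ i * y ^ j = r} := h ▸ Submodule.mem_top
  induction hr using Submodule.span_induction with
  | mem _ hr =>
    obtain ⟨i, j, rfl⟩ := hr
    exact ⟨i + D * j, pow_mul_pow_mem_weightedSpan le_rfl⟩
  | zero => exact ⟨0, zero_mem _⟩
  | add r s _ _ hr hs =>
    obtain ⟨⟨m, hm⟩, n, hn⟩ := hr, hs
    exact ⟨max m n, add_mem (weightedSpan_mono (le_max_left m n) hm)
      (weightedSpan_mono (le_max_right m n) hn)⟩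
  | smul a r _ hr => exact hr.imp fun m hm ↦ Submodule.smul_mem _ a hm

/-- A monic relation of degree `e` for `y` with coefficients of degree at most `D` lowers the
exponent of `y` below `e` without increasing the weight. -/
theorem weightedSpan_eq_span_of_aeval_eq_zero {s : K[X][X]} (hs : s.Monic)
    (hD : ∀ j, (s.coeff j).natDegree ≤ D)
    (hxy : s.eval₂ (aeval x : K[X] →ₐ[K] R).toRingHom y = 0) (m : ℕ) :
    weightedSpan x y D m =
      Submodule.span K {r | ∃ i j, i + D * j ≤ m ∧ j < s.natDegree ∧ x ^ i * y ^ j = r} := by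
  refine le_antisymm (Submodule.span_le.2 ?_)
    (Submodule.span_mono fun r ⟨i, j, hij, _, hr⟩ ↦ ⟨i, j, hij, hr⟩)
  rintro _ ⟨i, j, hij, rfl⟩
  induction j using Nat.strong_induction_on generalizing i with
  | _ j ih =>
    rcases lt_or_ge j s.natDegree with hj | hj
    · exact Submodule.subset_span ⟨i, j, hij, hj, rfl⟩
    obtain ⟨k, rfl⟩ := Nat.exists_eq_add_of_le hj
    have hpow : x ^ i * y ^ (s.natDegree + k) = -∑ l ∈ Finset.range s.natDegree,
        ∑ u ∈ Finset.range (D + 1), (s.coeff l).coeff u • (x ^ (i + u) * y ^ (k + l)) := by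
      rw [hs.as_sum, eval₂_add, eval₂_X_pow, eval₂_finsetSum] at hxy
      calc x ^ i * y ^ (s.natDegree + k) = x ^ i * y ^ k * y ^ s.natDegree := by ring
        _ = _ := by
          rw [eq_neg_of_add_eq_zero_left hxy, mul_neg, Finset.mul_sum]
          congr 1
          refine Finset.sum_congr rfl fun l _ ↦ ?_
          rw [eval₂_mul, eval₂_C, eval₂_X_pow, AlgHom.toRingHom_eq_coe, RingHom.coe_coe,
            aeval_eq_sum_range' (Nat.lt_succ_of_le (hD l)), Finset.sum_mul, Finset.mul_sum]
          refine Finset.sum_congr rfl fun u _ ↦ ?_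
          rw [smul_mul_assoc, mul_smul_comm]
          congr 1
          ring
    rw [hpow]
    refine neg_mem (Submodule.sum_mem _ fun l hl ↦ Submodule.sum_mem _ fun u hu ↦
      Submodule.smul_mem _ _ ?_)
    rw [Finset.mem_range] at hl hu
    refine ih (k + l) (by lia) _ ?_
    calc i + u + D * (k + l) ≤ i + D * (k + l + 1) := by rw [mul_add D (k + l)]; lia
      _ ≤ i + D * (s.natDegree + k) := by gcongr i + D * ?_; lia
      _ ≤ m := hij

end WeightedSpan

/-- The exponents `(i, j)` with `i + D * j ≤ m` and `j < e`, as pairs `⟨j, i⟩`. -/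
def weightedExponents (D e m : ℕ) : Finset (Σ _ : Fin e, ℕ) :=
  Finset.univ.sigma fun j ↦ Finset.range (m + 1 - D * j)

theorem card_weightedExponents_le (D e m : ℕ) : (weightedExponents D e m).card ≤ e * (m + 1) := by
  rw [weightedExponents, Finset.card_sigma]
  refine (Finset.sum_le_card_nsmul _ _ (m + 1) fun j _ ↦ by simp).trans (by simp)

theorem le_card_weightedExponents_add (D e m : ℕ) :
    e * (m + 1) ≤ (weightedExponents D e m).card + D * e ^ 2 := by
  calc e * (m + 1) = ∑ _j : Fin e, (m + 1) := by simp
    _ ≤ ∑ j : Fin e, ((m + 1 - D * j) + D * e) := Finset.sum_le_sum fun j _ ↦ by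
        have := Nat.mul_le_mul_left D j.2.le
        omega
    _ = (weightedExponents D e m).card + D * e ^ 2 := by
        simp only [weightedExponents, Finset.card_sigma, Finset.sum_add_distrib, Finset.card_range,
          Finset.sum_const, Finset.card_univ, Fintype.card_fin, smul_eq_mul]
        ring

section Curve

open Module

variable {K : Type*} [Field K]

/-- The monomial basis of the coordinate ring `K[X, Y] / (s)` of a plane curve given by a
polynomial `s` that is monic in `Y`, indexed by the exponents `⟨j, i⟩` of `X ^ i * Y ^ j`. -/
noncomputable def adjoinRootMonomialBasis {s : K[X][X]} (hs : s.Monic) :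
    Basis (Σ _ : Fin s.natDegree, ℕ) K (AdjoinRoot s) :=
  ((basisMonomials K).smulTower (AdjoinRoot.powerBasis' hs).basis).reindex
    ((Equiv.prodComm _ _).trans (Equiv.sigmaEquivProd _ _).symm)

theorem adjoinRootMonomialBasis_apply {s : K[X][X]} (hs : s.Monic)
    (z : Σ _ : Fin s.natDegree, ℕ) :
    adjoinRootMonomialBasis hs z =
      AdjoinRoot.of s X ^ z.2 * AdjoinRoot.root s ^ (z.1 : ℕ) := by
  obtain ⟨j, i⟩ := z
  rw [adjoinRootMonomialBasis, Basis.reindex_apply]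
  change ((basisMonomials K).smulTower (AdjoinRoot.powerBasis' hs).basis) (i, j) = _
  simp [Basis.smulTower_apply, Algebra.smul_def, ← X_pow_eq_monomial]

theorem weightedSpan_adjoinRoot {s : K[X][X]} (hs : s.Monic) {D : ℕ}
    (hD : ∀ j, (s.coeff j).natDegree ≤ D) (m : ℕ) :
    weightedSpan (AdjoinRoot.of s X) (AdjoinRoot.root s) D m = Submodule.span K
      (Set.range fun z : weightedExponents D s.natDegree m ↦ adjoinRootMonomialBasis hs z) := by
  have hof : (aeval (AdjoinRoot.of s X) : K[X] →ₐ[K] AdjoinRoot s).toRingHom =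
      AdjoinRoot.of s := by
    ext x
    · exact aeval_C _ x
    · simp
  rw [weightedSpan_eq_span_of_aeval_eq_zero hs hD (by rw [hof, AdjoinRoot.eval₂_root])]
  congr 1
  ext r
  simp only [Set.mem_ofPred_eq, Set.mem_range, Subtype.exists, adjoinRootMonomialBasis_apply,
    weightedExponents, Sigma.exists, Finset.mem_sigma, Finset.mem_univ, true_and, Finset.mem_range]
  constructor
  · rintro ⟨i, j, hij, hj, rfl⟩
    exact ⟨⟨j, hj⟩, i, by dsimp only; omega, rfl⟩
  · rintro ⟨j, i, hij, rfl⟩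
    exact ⟨i, j, by omega, j.2, rfl⟩

theorem finrank_weightedSpan_adjoinRoot {s : K[X][X]} (hs : s.Monic) {D : ℕ}
    (hD : ∀ j, (s.coeff j).natDegree ≤ D) (m : ℕ) :
    finrank K (weightedSpan (K := K) (AdjoinRoot.of s X) (AdjoinRoot.root s) D m) =
      (weightedExponents D s.natDegree m).card := by
  rw [weightedSpan_adjoinRoot hs hD]
  exact (finrank_span_eq_card ((adjoinRootMonomialBasis hs).linearIndependent.comp _
    Subtype.val_injective)).trans (Fintype.card_coe _)

/-- The filtration of `K[X, Y] / (s)` by weighted degree. -/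
noncomputable def adjoinRootFiltration {s : K[X][X]} (hs : s.Monic) {D : ℕ}
    (hD : ∀ j, (s.coeff j).natDegree ≤ D) :
    LinearGrowthFiltration K (AdjoinRoot s) s.natDegree (D * s.natDegree ^ 2) where
  space := weightedSpan (AdjoinRoot.of s X) (AdjoinRoot.root s) D
  mono := weightedSpan_mono
  one_mem := by simpa using pow_mul_pow_mem_weightedSpan (i := 0) (j := 0) le_rfl
  mul_mem := mul_mem_weightedSpan
  exists_mem := exists_mem_weightedSpan <| top_unique <| by
    rw [← (adjoinRootMonomialBasis hs).span_eq]
    refine Submodule.span_mono ?_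
    rintro _ ⟨z, rfl⟩
    exact ⟨z.2, z.1, (adjoinRootMonomialBasis_apply hs z).symm⟩
  finiteDimensional m := by
    rw [weightedSpan_adjoinRoot hs hD]
    exact FiniteDimensional.span_of_finite K (Set.finite_range _)
  le_finrank m := by
    rw [finrank_weightedSpan_adjoinRoot hs hD]
    exact le_card_weightedExponents_add D _ m
  finrank_le m := by
    rw [finrank_weightedSpan_adjoinRoot hs hD]
    exact card_weightedExponents_le D _ m

instance isTorsionFree_polynomial_powerSeries : Module.IsTorsionFree K[X] K⟦X⟧ := by
  rw [Module.isTorsionFree_iff_algebraMap_injective]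
  intro f g h
  simpa [PowerSeries.algebraMap_apply'] using h

/-- The `K`-point `(x, y)` of the plane curve `s = 0`, as a homomorphism on the coordinate ring. -/
noncomputable def evalAdjoinRoot (s : K[X][X])
    (z : {z : K × K // s.evalEval z.1 z.2 = 0}) : AdjoinRoot s →ₐ[K] K :=
  AdjoinRoot.liftAlgHom s (aeval z.1.1) z.1.2 <| by
    refine Eq.trans ?_ z.2
    rw [← eval₂_evalRingHom]
    congr 1

theorem evalAdjoinRoot_injective (s : K[X][X]) : Function.Injective (evalAdjoinRoot s) := by
  intro z w h
  have hx := DFunLike.congr_fun h (AdjoinRoot.of s X)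
  have hy := DFunLike.congr_fun h (AdjoinRoot.root s)
  simp only [evalAdjoinRoot, AdjoinRoot.liftAlgHom_of, AdjoinRoot.liftAlgHom_root, aeval_X]
    at hx hy
  exact Subtype.ext (Prod.ext hx hy)

/-- The embedding of the coordinate ring of the plane curve traced by `(X, α)` into `K⟦X⟧`. -/
noncomputable def adjoinRootMinpolyToPowerSeries (α : K⟦X⟧) :
    AdjoinRoot (minpoly K[X] α) →ₐ[K] K⟦X⟧ :=
  ((Algebra.adjoin K[X] {α}).val.comp (AdjoinRoot.Minpoly.toAdjoin K[X] α)).restrictScalars K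

theorem adjoinRootMinpolyToPowerSeries_of_X (α : K⟦X⟧) :
    adjoinRootMinpolyToPowerSeries α (AdjoinRoot.of _ X) = PowerSeries.X :=
  (((Algebra.adjoin K[X] {α}).val.comp (AdjoinRoot.Minpoly.toAdjoin K[X] α)).commutes X).trans
    (by simp [PowerSeries.algebraMap_apply'])

theorem adjoinRootMinpolyToPowerSeries_root (α : K⟦X⟧) :
    adjoinRootMinpolyToPowerSeries α (AdjoinRoot.root _) = α :=
  AdjoinRoot.Minpoly.coe_toAdjoin_mk_X

theorem adjoinRootMinpolyToPowerSeries_injective {α : K⟦X⟧} (hα : IsIntegral K[X] α) :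
    Function.Injective (adjoinRootMinpolyToPowerSeries α) :=
  Subtype.val_injective.comp (minpoly.ToAdjoin.injective hα)

theorem linearIndependent_X_pow_mul_pow {α : K⟦X⟧} (hα : IsIntegral K[X] α) :
    LinearIndependent K fun z : Σ _ : Fin (minpoly K[X] α).natDegree, ℕ ↦
      (PowerSeries.X ^ z.2 * α ^ (z.1 : ℕ) : K⟦X⟧) := by
  have h := (adjoinRootMonomialBasis (minpoly.monic hα)).linearIndependent.map'
    (adjoinRootMinpolyToPowerSeries α).toLinearMap
    (LinearMap.ker_eq_bot.2 (adjoinRootMinpolyToPowerSeries_injective hα))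
  simpa only [Function.comp_def, adjoinRootMonomialBasis_apply, AlgHom.toLinearMap_apply, map_mul,
    map_pow, adjoinRootMinpolyToPowerSeries_of_X, adjoinRootMinpolyToPowerSeries_root] using h

theorem card_evalEval_minpoly_eq_zero_le [Fintype K] {α : K⟦X⟧} (hα : IsIntegral K[X] α)
    {D e : ℕ} (he : (minpoly K[X] α).natDegree = e)
    (hD : ∀ j, ((minpoly K[X] α).coeff j).natDegree ≤ D)
    (p : ℕ) [Fact p.Prime] [CharP K p] {a b : ℕ}
    (hq : Fintype.card K = p ^ a * p ^ b) (hab : p ^ a ≤ p ^ b)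
    (ha : (2 * (D * e ^ 2) + 1) * (e * (2 * (D * e ^ 2) + 4)) + D * e ^ 2 + e + 1 ≤ p ^ a) :
    Nat.card {z : K × K // (minpoly K[X] α).evalEval z.1 z.2 = 0} ≤
      Fintype.card K + p ^ b * (1 + e * (2 * (D * e ^ 2) + 4)) := by
  classical
  subst he
  have hι := adjoinRootMinpolyToPowerSeries_injective hα
  have : IsDomain (AdjoinRoot (minpoly K[X] α)) :=
    hι.isDomain (adjoinRootMinpolyToPowerSeries α).toRingHom
  rw [Nat.card_eq_fintype_card]
  exact (adjoinRootFiltration (minpoly.monic hα) hD).card_le hι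
    (adjoinRootMinpolyToPowerSeries_of_X α) p hq hab ha (evalAdjoinRoot_injective _)

end Curve

/-! ### Specialization of a power series branch -/

section Specialization

theorem exists_aeval_powerSeries_eq_zero {A : Type*} [CommRing A] {S : A[X][X]} (hS : S.Monic)
    {x : A} (h0 : (S.map (evalRingHom 0)).eval x = 0)
    (h1 : IsUnit ((S.map (evalRingHom 0)).derivative.eval x)) :
    ∃ α : A⟦X⟧, aeval α S = 0 := by
  have heval : PowerSeries.constantCoeff.comp (algebraMap A[X] A⟦X⟧) = evalRingHom 0 :=
    Polynomial.ringHom_ext (by simp [PowerSeries.algebraMap_apply'])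
      (by simp [PowerSeries.algebraMap_apply'])
  have hcoeff (T : A[X][X]) : PowerSeries.constantCoeff
      ((T.map (algebraMap A[X] A⟦X⟧)).eval (PowerSeries.C x)) =
        (T.map (evalRingHom 0)).eval x := by
    rw [eval_map, hom_eval₂, heval, PowerSeries.constantCoeff_C, eval_map]
  obtain ⟨α, hα, -⟩ := HenselianRing.is_henselian (I := Ideal.span {(PowerSeries.X : A⟦X⟧)})
    (S.map (algebraMap A[X] A⟦X⟧)) (hS.map _) (PowerSeries.C x)
    (by rw [Ideal.mem_span_singleton, PowerSeries.X_dvd_iff, hcoeff, h0])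
    (IsUnit.map _ <| by
      rwa [PowerSeries.isUnit_iff_constantCoeff, derivative_map, hcoeff, ← derivative_map])
  exact ⟨α, by rwa [IsRoot, eval_map_algebraMap] at hα⟩

theorem minpoly_eq_of_irreducible_map {A B F : Type*} [CommRing A] [IsDomain A]
    [IsIntegrallyClosed A] [CommRing B] [IsDomain B] [Algebra A B] [Module.IsTorsionFree A B]
    [CommRing F] [IsDomain F] (φ : A →+* F) {S : A[X]} (hS : S.Monic)
    (hirr : Irreducible (S.map φ)) {α : B} (hα : aeval α S = 0) : minpoly A α = S := by
  have hint : IsIntegral A α := ⟨S, hS, hα⟩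
  have hdvd := minpoly.isIntegrallyClosed_dvd hint hα
  refine eq_of_monic_of_associated (minpoly.monic hint) hS ?_
  exact ((hS.irreducible_of_irreducible_map φ S hirr).dvd_iff.1 hdvd).resolve_left
    (minpoly.not_isUnit A α) |>.symm

theorem exists_ne_zero_sum_mul_eq_ite {A I ν : Type*} [CommRing A] [IsDomain A] [Finite I]
    [DecidableEq I] {w : I → ν → A} (hw : LinearIndependent A w) (a : I) :
    ∃ d ≠ 0, ∃ (s : Finset ν) (c : ν → A), ∀ b, ∑ n ∈ s, c n * w b n = if b = a then d else 0 := by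
  have := Fintype.ofFinite I
  let E := FractionRing A
  have hE : LinearIndependent E fun i n ↦ algebraMap A E (w i n) := by
    refine LinearIndependent.localization E (nonZeroDivisors A) ?_
    refine hw.map' ((Algebra.linearMap A E).compLeft ν) (LinearMap.ker_eq_bot.2 ?_)
    exact fun f g h ↦ funext fun n ↦ IsFractionRing.injective A E (congrFun h n)
  have hspan := span_flip_eq_top_iff_linearIndependent.2 hE
  obtain ⟨c, hc⟩ := Finsupp.mem_span_range_iff_exists_finsupp.1
    (hspan ▸ Submodule.mem_top : (Pi.single a 1 : I → E) ∈ _)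
  obtain ⟨d, hd⟩ := IsLocalization.exist_integer_multiples (nonZeroDivisors A) c.support c
  choose! c' hc' using hd
  refine ⟨d, nonZeroDivisors.ne_zero d.2, c.support, c', fun b ↦ ?_⟩
  apply IsFractionRing.injective A E
  calc algebraMap A E (∑ n ∈ c.support, c' n * w b n)
      = algebraMap A E d * ∑ n ∈ c.support, c n * algebraMap A E (w b n) := by
        rw [map_sum, Finset.mul_sum]
        refine Finset.sum_congr rfl fun n hn ↦ ?_
        rw [map_mul, hc' n hn, Algebra.smul_def, mul_assoc]
    _ = algebraMap A E d * (Pi.single a 1 : I → E) b := by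
        rw [← hc, Finsupp.sum, Finset.sum_apply]
        rfl
    _ = algebraMap A E (if b = a then d else 0) := by
        split_ifs with h <;> simp [h]

theorem exists_ne_zero_linearIndependent_map {A I ν : Type*} [CommRing A] [IsDomain A] [Finite I]
    {w : I → ν → A} (hw : LinearIndependent A w) :
    ∃ d ≠ 0, ∀ (K : Type*) [Field K] (ρ : A →+* K), ρ d ≠ 0 →
      LinearIndependent K fun i n ↦ ρ (w i n) := by
  classical
  have := Fintype.ofFinite I
  choose d hd s c hc using exists_ne_zero_sum_mul_eq_ite hw
  refine ⟨∏ a, d a, Finset.prod_ne_zero_iff.2 fun a _ ↦ hd a, fun K _ ρ hρ ↦ ?_⟩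
  rw [map_prod, Finset.prod_ne_zero_iff] at hρ
  refine Fintype.linearIndependent_iff.2 fun x hx a ↦ ?_
  have hxa : ∑ b, x b * ρ (∑ n ∈ s a, c a n * w b n) = 0 := by
    calc ∑ b, x b * ρ (∑ n ∈ s a, c a n * w b n)
        = ∑ n ∈ s a, ρ (c a n) * ∑ b, x b * ρ (w b n) := by
          simp only [Finset.mul_sum, map_sum, map_mul]
          rw [Finset.sum_comm]
          exact Finset.sum_congr rfl fun n _ ↦ Finset.sum_congr rfl fun b _ ↦ by ring
      _ = 0 := Finset.sum_eq_zero fun n _ ↦ by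
          have := congrFun hx n
          simp only [Finset.sum_apply, Pi.smul_apply, smul_eq_mul, Pi.zero_apply] at this
          rw [this, mul_zero]
  simp only [hc, apply_ite ρ, map_zero, mul_ite, mul_zero, Finset.sum_ite_eq', Finset.mem_univ,
    if_true] at hxa
  exact (mul_eq_zero.1 hxa).resolve_right (hρ a (Finset.mem_univ a))

theorem exists_ne_zero_linearIndependent_powerSeries_map {A I : Type*} [CommRing A] [IsDomain A]
    [Finite I] {v : I → A⟦X⟧} (hv : LinearIndependent A v) :
    ∃ d ≠ 0, ∀ (K : Type*) [Field K] (ρ : A →+* K), ρ d ≠ 0 →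
      LinearIndependent K fun i ↦ PowerSeries.map ρ (v i) := by
  have hker : LinearMap.ker (LinearMap.pi fun n ↦ PowerSeries.coeff (R := A) n) = ⊥ :=
    LinearMap.ker_eq_bot.2 fun f g h ↦ PowerSeries.ext fun n ↦ congrFun h n
  obtain ⟨d, hd, hρ⟩ := exists_ne_zero_linearIndependent_map (hv.map' _ hker)
  refine ⟨d, hd, fun K _ ρ hne ↦ LinearIndependent.of_comp
    (LinearMap.pi fun n ↦ PowerSeries.coeff (R := K) n) (hρ K ρ hne)⟩

theorem exists_ne_zero_lift_away {L : Type*} [CommRing L] [IsDomain L] {δ : L} (hδ : δ ≠ 0)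
    {d : Localization.Away δ} (hd : d ≠ 0) :
    ∃ W ≠ 0, ∀ (K : Type*) [Field K] (ρ : L →+* K), ρ W ≠ 0 →
      ∃ τ : Localization.Away δ →+* K, τ.comp (algebraMap L _) = ρ ∧ τ d ≠ 0 := by
  obtain ⟨⟨W, u⟩, hW⟩ := IsLocalization.surj (Submonoid.powers δ) d
  refine ⟨W * δ, mul_ne_zero ?_ hδ, fun K _ ρ hρ ↦ ?_⟩
  · rintro rfl
    rw [map_zero] at hW
    have : IsDomain (Localization.Away δ) :=
      IsLocalization.isDomain_localization (powers_le_nonZeroDivisors_of_noZeroDivisors hδ)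
    exact hd ((mul_eq_zero.1 hW).resolve_right (IsLocalization.map_units _ u).ne_zero)
  · rw [map_mul] at hρ
    have hlift := IsLocalization.Away.lift_comp (S := Localization.Away δ) δ
      (right_ne_zero_of_mul hρ).isUnit
    refine ⟨_, hlift, fun h0 ↦ left_ne_zero_of_mul hρ ?_⟩
    rw [← hlift, RingHom.comp_apply, ← hW, map_mul, h0, zero_mul]

theorem coeff_coeff_swap {A : Type*} [CommRing A] (s : A[X][X]) (i j : ℕ) :
    ((Bivariate.swap s).coeff i).coeff j = (s.coeff j).coeff i := by
  induction s using Polynomial.induction_on' with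
  | add s t hs ht => simp only [map_add, coeff_add, hs, ht]
  | monomial n f =>
    induction f using Polynomial.induction_on' with
    | add f g hf hg => simp only [map_add, coeff_add, hf, hg]
    | monomial m r =>
      rw [Bivariate.swap_monomial_monomial]
      simp only [coeff_monomial]
      split_ifs <;> simp_all [coeff_monomial]

theorem natDegree_swap_le_iff {A : Type*} [CommRing A] {s : A[X][X]} {D : ℕ} :
    (Bivariate.swap s).natDegree ≤ D ↔ ∀ j, (s.coeff j).natDegree ≤ D := by
  simp only [natDegree_le_iff_coeff_eq_zero, Polynomial.ext_iff, coeff_zero, coeff_coeff_swap]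
  exact ⟨fun h j i hi ↦ h i hi j, fun h i hi j ↦ h j i hi⟩

theorem natDegree_coeff_le_of_dvd {A : Type*} [CommRing A] [IsDomain A] {s π : A[X][X]}
    (hs : s ≠ 0) (h : π ∣ s) {D : ℕ} (hD : ∀ j, (s.coeff j).natDegree ≤ D) (j : ℕ) :
    (π.coeff j).natDegree ≤ D := by
  have hs' : Bivariate.swap s ≠ 0 := (map_ne_zero_iff _ Bivariate.swap.injective).2 hs
  exact natDegree_swap_le_iff.1 ((natDegree_le_of_dvd (_root_.map_dvd _ h) hs').trans
    (natDegree_swap_le_iff.2 hD)) j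

theorem aeval_powerSeries_eq_sum {K : Type*} [CommRing K] {D e : ℕ} {g : K[X][X]}
    (hg : g.natDegree < e) (hD : ∀ j, (g.coeff j).natDegree ≤ D) (α : K⟦X⟧) :
    aeval α g = ∑ z : Fin (D + 1) × Fin e,
      (g.coeff z.2).coeff z.1 • (PowerSeries.X ^ (z.1 : ℕ) * α ^ (z.2 : ℕ)) := by
  rw [aeval_eq_sum_range' hg, Fintype.sum_prod_type_right, Finset.sum_range]
  refine Finset.sum_congr rfl fun j _ ↦ ?_
  rw [Algebra.smul_def, (g.coeff j).as_sum_range_C_mul_X_pow' (Nat.lt_succ_of_le (hD j)),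
    Finset.sum_range, map_sum, Finset.sum_mul]
  refine Finset.sum_congr rfl fun i _ ↦ ?_
  simp [PowerSeries.algebraMap_apply', PowerSeries.smul_eq_C_mul, mul_assoc]

/-- It suffices to test algebraic relations of bidegree less than `(D + 1, deg S)`, because the
minimal polynomial is a factor of `S`. -/
theorem minpoly_eq_of_linearIndependent {K : Type*} [Field K] {S : K[X][X]} (hS : S.Monic)
    {D : ℕ} (hD : ∀ j, (S.coeff j).natDegree ≤ D) {α : K⟦X⟧} (hα : aeval α S = 0)
    (hind : LinearIndependent K fun z : Fin (D + 1) × Fin S.natDegree ↦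
      (PowerSeries.X ^ (z.1 : ℕ) * α ^ (z.2 : ℕ) : K⟦X⟧)) :
    minpoly K[X] α = S := by
  have hint : IsIntegral K[X] α := ⟨S, hS, hα⟩
  have hdvd := minpoly.isIntegrallyClosed_dvd hint hα
  refine (eq_of_monic_of_dvd_of_natDegree_le (minpoly.monic hint) hS hdvd ?_).symm
  refine le_of_not_gt fun hlt ↦ ?_
  have hπD := natDegree_coeff_le_of_dvd hS.ne_zero hdvd hD
  have hrel := (aeval_powerSeries_eq_sum hlt hπD α).symm.trans (minpoly.aeval K[X] α)
  have hzero := Fintype.linearIndependent_iff.1 hind _ hrel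
  refine (minpoly.ne_zero hint) (Polynomial.ext fun j ↦ Polynomial.ext fun i ↦ ?_)
  rw [coeff_zero, coeff_zero]
  by_cases hij : i ≤ D ∧ j < S.natDegree
  · exact hzero (⟨i, Nat.lt_succ_of_le hij.1⟩, ⟨j, hij.2⟩)
  · rcases not_and_or.1 hij with h | h
    · exact coeff_eq_zero_of_natDegree_lt ((hπD j).trans_lt (not_le.1 h))
    · rw [coeff_eq_zero_of_natDegree_lt (hlt.trans_le (not_lt.1 h)), coeff_zero]

theorem aeval_powerSeries_map {A B : Type*} [CommRing A] [CommRing B] (τ : A →+* B)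
    (α : A⟦X⟧) (S : A[X][X]) :
    aeval (PowerSeries.map τ α) (S.map (mapRingHom τ)) = PowerSeries.map τ (aeval α S) := by
  have hτ : (algebraMap B[X] B⟦X⟧).comp (mapRingHom τ) =
      (PowerSeries.map τ).comp (algebraMap A[X] A⟦X⟧) :=
    Polynomial.ringHom_ext (by simp [PowerSeries.algebraMap_apply'])
      (by simp [PowerSeries.algebraMap_apply'])
  rw [aeval_def, aeval_def, eval₂_map, hτ, hom_eval₂]

theorem linearIndependent_X_pow_mul_pow_of_map {A E : Type*} [CommRing A] [Field E] [Algebra A E]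
    [FaithfulSMul A E] {S : A[X][X]} (hS : S.Monic) {α : A⟦X⟧}
    (hα : minpoly E[X] (PowerSeries.map (algebraMap A E) α) =
      S.map (mapRingHom (algebraMap A E))) (D : ℕ) :
    LinearIndependent A fun z : Fin (D + 1) × Fin S.natDegree ↦
      (PowerSeries.X ^ (z.1 : ℕ) * α ^ (z.2 : ℕ) : A⟦X⟧) := by
  have hint : IsIntegral E[X] (PowerSeries.map (algebraMap A E) α) :=
    minpoly.ne_zero_iff.1 (hα ▸ (hS.map _).ne_zero)
  have hdeg : S.natDegree = (minpoly E[X] (PowerSeries.map (algebraMap A E) α)).natDegree := by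
    rw [hα, hS.natDegree_map]
  have hE := (linearIndependent_X_pow_mul_pow hint).comp
    (fun z : Fin (D + 1) × Fin S.natDegree ↦ ⟨Fin.cast hdeg z.2, (z.1 : ℕ)⟩)
    (fun z w h ↦ by
      simp only [Sigma.mk.injEq, Fin.cast_inj, heq_eq_eq] at h
      exact Prod.ext (Fin.ext h.2) h.1)
  refine LinearIndependent.of_comp (PowerSeries.mapAlgHom (Algebra.ofId A E)).toLinearMap ?_
  simpa only [Function.comp_def, Fin.val_cast, AlgHom.toLinearMap_apply, map_mul, map_pow,
    PowerSeries.mapAlgHom_apply, Algebra.toRingHom_ofId, PowerSeries.map_X] using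
    hE.restrict_scalars' A

theorem map_mapRingHom_map_evalRingHom {L B : Type*} [CommRing L] [CommRing B] (S : L[X][X])
    (φ : L →+* B) (b : L) :
    (S.map (mapRingHom φ)).map (evalRingHom (φ b)) = (S.map (evalRingHom b)).map φ := by
  rw [Polynomial.map_map, Polynomial.map_map]
  congr 1
  ext <;> simp

/-- A simple root of the fibre over `0` extends to a power series branch, whose degree is detected
on the irreducible fibre over `a`. -/
theorem exists_linearIndependent_branch {L : Type*} [CommRing L] [IsDomain L]
    [IsIntegrallyClosed L] {S : L[X][X]} (hS : S.Monic) {a : L}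
    (hirr : Irreducible (S.map (evalRingHom a))) {x δ : L}
    (h0 : (S.map (evalRingHom 0)).eval x = 0)
    (h1 : (S.map (evalRingHom 0)).derivative.eval x = δ) (hδ : δ ≠ 0) (D : ℕ) :
    ∃ α : (Localization.Away δ)⟦X⟧,
      aeval α (S.map (mapRingHom (algebraMap L (Localization.Away δ)))) = 0 ∧
      LinearIndependent (Localization.Away δ) fun z : Fin (D + 1) × Fin S.natDegree ↦
        (PowerSeries.X ^ (z.1 : ℕ) * α ^ (z.2 : ℕ) : (Localization.Away δ)⟦X⟧) := by
  let A := Localization.Away δ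
  let E := FractionRing L
  have hδE : IsUnit (algebraMap L E δ) :=
    ((map_ne_zero_iff _ (IsFractionRing.injective L E)).2 hδ).isUnit
  let _ : Algebra A E := (IsLocalization.Away.lift δ hδE).toAlgebra
  have hcomp : (algebraMap A E).comp (algebraMap L A) = algebraMap L E :=
    IsLocalization.Away.lift_comp δ hδE
  have : IsScalarTower L A E := IsScalarTower.of_algebraMap_eq' hcomp.symm
  have : IsDomain A :=
    IsLocalization.isDomain_localization (powers_le_nonZeroDivisors_of_noZeroDivisors hδ)
  have : IsFractionRing A E :=
    IsFractionRing.isFractionRing_of_isDomain_of_isLocalization (Submonoid.powers δ) A E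
  have : FaithfulSMul A E := (faithfulSMul_iff_algebraMap_injective A E).2
    (IsFractionRing.injective A E)
  have hfib := map_mapRingHom_map_evalRingHom S (algebraMap L A) 0
  rw [map_zero] at hfib
  obtain ⟨α, hα⟩ := exists_aeval_powerSeries_eq_zero (hS.map (mapRingHom (algebraMap L A)))
    (x := algebraMap L A x) (by rw [hfib, eval_map_apply, h0, map_zero])
    (by
      rw [hfib, derivative_map, eval_map_apply, h1]
      exact IsLocalization.Away.algebraMap_isUnit δ)
  refine ⟨α, hα, ?_⟩
  rw [← hS.natDegree_map (mapRingHom (algebraMap L A))]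
  refine linearIndependent_X_pow_mul_pow_of_map (hS.map _)
    (minpoly_eq_of_irreducible_map (evalRingHom (algebraMap L E a)) ((hS.map _).map _) ?_ ?_) D
  · rw [Polynomial.map_map (mapRingHom _) (mapRingHom _), mapRingHom_comp, hcomp,
      map_mapRingHom_map_evalRingHom]
    exact (hS.map _).irreducible_iff_irreducible_map_fraction_map.1 hirr
  · rw [aeval_powerSeries_map, hα, map_zero]

theorem exists_ne_zero_minpoly_eq_map {L : Type*} [CommRing L] [IsDomain L]
    [IsIntegrallyClosed L] {S : L[X][X]} (hS : S.Monic) {a : L}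
    (hirr : Irreducible (S.map (evalRingHom a))) {x : L}
    (h0 : (S.map (evalRingHom 0)).eval x = 0)
    (h1 : (S.map (evalRingHom 0)).derivative.eval x ≠ 0) :
    ∃ W ≠ 0, ∀ (K : Type*) [Field K] (ρ : L →+* K), ρ W ≠ 0 →
      ∃ α : K⟦X⟧, IsIntegral K[X] α ∧ minpoly K[X] α = S.map (mapRingHom ρ) := by
  obtain ⟨α, hα, hind⟩ :=
    exists_linearIndependent_branch hS hirr h0 rfl h1 (Bivariate.swap S).natDegree
  have : IsDomain (Localization.Away ((S.map (evalRingHom 0)).derivative.eval x)) :=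
    IsLocalization.isDomain_localization (powers_le_nonZeroDivisors_of_noZeroDivisors h1)
  obtain ⟨d, hd, hmap⟩ := exists_ne_zero_linearIndependent_powerSeries_map hind
  obtain ⟨W, hW, hlift⟩ := exists_ne_zero_lift_away h1 hd
  refine ⟨W, hW, fun K _ ρ hρ ↦ ?_⟩
  obtain ⟨τ, rfl, hτd⟩ := hlift K ρ hρ
  have hroot : aeval (PowerSeries.map τ α) (S.map (mapRingHom (τ.comp (algebraMap L _)))) = 0 := by
    rw [← mapRingHom_comp, ← Polynomial.map_map, aeval_powerSeries_map, hα, map_zero]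
  have hmonic := hS.map (mapRingHom (τ.comp (algebraMap L _)))
  refine ⟨PowerSeries.map τ α, ⟨_, hmonic, hroot⟩, minpoly_eq_of_linearIndependent hmonic
    (D := (Bivariate.swap S).natDegree) (fun j ↦ ?_) hroot ?_⟩
  · rw [coeff_map, coe_mapRingHom]
    exact natDegree_map_le.trans (natDegree_swap_le_iff.1 le_rfl j)
  · rw [hS.natDegree_map]
    simpa only [map_mul, map_pow, PowerSeries.map_X] using hmap K τ hτd

end Specialization

/-! ### Slices along lines -/

section Evaluation

variable {σ k A B : Type*} [CommRing k] [CommRing A] [Algebra k A] [CommRing B] [Algebra k B]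

/-- Evaluation of a polynomial with a distinguished variable `x` at the point `(y, x)`, where `y`
gives the values of the remaining variables. -/
noncomputable def evalAt (y : σ → A) (x : A) : (MvPolynomial σ k)[X] →ₐ[k] A :=
  eval₂AlgHom (MvPolynomial.aeval y) x fun _ ↦ Commute.all _ _

@[simp]
theorem evalAt_C (y : σ → A) (x : A) (f : MvPolynomial σ k) :
    evalAt y x (C f) = MvPolynomial.aeval y f := by
  simp [evalAt]

@[simp]
theorem evalAt_X (y : σ → A) (x : A) : evalAt (k := k) y x X = x := by
  simp [evalAt]

theorem eval_map_aeval (y : σ → A) (x : A) (Q : (MvPolynomial σ k)[X]) :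
    (Q.map (MvPolynomial.aeval y).toRingHom).eval x = evalAt y x Q := by
  rw [eval_map]
  rfl

theorem map_evalAt (φ : A →ₐ[k] B) (y : σ → A) (x : A) (Q : (MvPolynomial σ k)[X]) :
    φ (evalAt y x Q) = evalAt (φ ∘ y) (φ x) Q :=
  congr($(show φ.comp (evalAt y x) = evalAt (φ ∘ y) (φ x) by ext <;> simp) Q)

end Evaluation

section Slices

variable {σ k : Type*} [CommRing k]

/-- The coordinate ring of pairs consisting of a point `v = (y, x)` and the coordinates `y'` of a
second point `v' = (y', x')`: the index `inl none` is `x`, the indices `inl (some i)` are `y`, the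
indices `inr i` are `y'`. The remaining coordinate `x'` is the variable of the polynomial ring over
this ring. -/
abbrev PairRing (σ k : Type*) [CommRing k] : Type _ := MvPolynomial (Option σ ⊕ σ) k

/-- The restriction to the diagonal `v' = v` of a polynomial function of `(v, v')`. -/
noncomputable def restrictDiagonal : (PairRing σ k)[X] →ₐ[k] MvPolynomial (Option σ) k :=
  evalAt (Sum.elim MvPolynomial.X (MvPolynomial.X ∘ some)) (MvPolynomial.X none)

/-- The line `y + t (y' - y)` through the diagonal point with coordinates `y`. -/
def scalePair {A : Type*} [CommRing A] (t : A) (w : Option σ ⊕ σ → A) : Option σ ⊕ σ → A :=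
  Sum.elim (w ∘ Sum.inl)
    fun i ↦ w (Sum.inl (some i)) + t * (w (Sum.inr i) - w (Sum.inl (some i)))

theorem scalePair_inv_scalePair {K : Type*} [Field K] {t : K} (ht : t ≠ 0)
    (w : Option σ ⊕ σ → K) : scalePair t⁻¹ (scalePair t w) = w := by
  ext (i | i)
  · rfl
  · simp [scalePair, ht]

theorem scalePair_scalePair_inv {K : Type*} [Field K] {t : K} (ht : t ≠ 0)
    (w : Option σ ⊕ σ → K) : scalePair t (scalePair t⁻¹ w) = w := by
  simpa using scalePair_inv_scalePair (inv_ne_zero ht) w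

/-- Substitution of the generic line `y + t (y' - y)` for `y'`; the parameter `t` is the variable
of the target ring. -/
noncomputable def slice : PairRing σ k →ₐ[k] (PairRing σ k)[X] :=
  MvPolynomial.aeval (scalePair X (C ∘ MvPolynomial.X))

theorem map_slice_map_evalRingHom_one (P : (PairRing σ k)[X]) :
    (P.map slice.toRingHom).map (evalRingHom 1) = P := by
  have hslice : (evalRingHom 1).comp slice.toRingHom = RingHom.id (PairRing σ k) := by
    apply MvPolynomial.ringHom_ext
    · intro r
      simp [slice]
    · rintro (i | i) <;> simp [slice, scalePair]
  rw [Polynomial.map_map, hslice, Polynomial.map_id]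

theorem eval_map_slice_zero (P : (PairRing σ k)[X]) :
    ((P.map slice.toRingHom).map (evalRingHom 0)).eval (MvPolynomial.X (Sum.inl none)) =
      MvPolynomial.rename Sum.inl (restrictDiagonal P) := by
  rw [Polynomial.map_map, restrictDiagonal, map_evalAt, ← eval_map_aeval]
  congr 2
  · simp
  · apply MvPolynomial.ringHom_ext
    · intro r
      simp [slice]
    · rintro (i | i) <;> simp [slice, scalePair]

theorem evalEval_map_slice {K : Type*} [CommRing K] [Algebra k K] (P : (PairRing σ k)[X])
    (w : Option σ ⊕ σ → K) (t u : K) :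
    ((P.map slice.toRingHom).map (mapRingHom (MvPolynomial.aeval w).toRingHom)).evalEval t u =
      evalAt (scalePair t w) u P := by
  rw [← map_evalRingHom_eval, Polynomial.map_map, Polynomial.map_map, ← eval_map_aeval]
  congr 2
  apply MvPolynomial.ringHom_ext
  · intro r
    simp [slice]
  · rintro (i | i) <;> simp [slice, scalePair]

end Slices

section Counting

theorem card_aeval_eq_zero_mul_card_le {τ k : Type*} [Fintype τ] [Field k] {f : MvPolynomial τ k}
    (hf : f ≠ 0) (K : Type*) [Field K] [Fintype K] [Algebra k K] :
    Nat.card {y : τ → K // MvPolynomial.aeval y f = 0} * Fintype.card K ≤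
      f.totalDegree * Fintype.card K ^ Fintype.card τ := by
  classical
  let i := Fintype.equivFin τ
  let g : MvPolynomial (Fin (Fintype.card τ)) K :=
    MvPolynomial.map (algebraMap k K) (MvPolynomial.rename i f)
  have hg : g ≠ 0 :=
    (map_ne_zero_iff _ (MvPolynomial.map_injective _ (algebraMap k K).injective)).2
      ((map_ne_zero_iff _ (MvPolynomial.rename_injective _ i.injective)).2 hf)
  have hdeg : g.totalDegree ≤ f.totalDegree :=
    (Finset.sup_mono (MvPolynomial.support_map_subset _ _)).trans
      (MvPolynomial.totalDegree_rename_le _ _)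
  have hcard : (Finset.filter (fun x ↦ MvPolynomial.eval x g = 0)
      (Fintype.piFinset fun _ ↦ (Finset.univ : Finset K))).card =
        Nat.card {y : τ → K // MvPolynomial.aeval y f = 0} := by
    rw [Nat.card_eq_fintype_card, ← Fintype.card_coe]
    refine Fintype.card_congr ((Equiv.arrowCongr i.symm (Equiv.refl K)).subtypeEquiv fun x ↦ ?_)
    simp only [Fintype.piFinset_univ, Finset.mem_filter, Finset.mem_univ, true_and, g,
      MvPolynomial.eval_map, MvPolynomial.aeval_def, MvPolynomial.eval₂_rename]
    rfl
  have hq : (0 : ℚ≥0) < Fintype.card K := by exact_mod_cast Fintype.card_pos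
  have hsz := MvPolynomial.schwartz_zippel_totalDegree hg (Finset.univ : Finset K)
  rw [Finset.card_univ, div_le_div_iff₀ (pow_pos hq _) hq, hcard] at hsz
  exact (Nat.cast_le.1 (by exact_mod_cast hsz)).trans (Nat.mul_le_mul_right _ hdeg)

theorem card_evalEval_eq_zero_le {K : Type*} [Field K] [Fintype K] {s : K[X][X]} (hs : s.Monic) :
    Nat.card {z : K × K // s.evalEval z.1 z.2 = 0} ≤ s.natDegree * Fintype.card K := by
  classical
  rw [Nat.card_congr (Equiv.subtypeProdEquivSigmaSubtype fun x y : K ↦ s.evalEval x y = 0),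
    Nat.card_sigma, mul_comm, ← smul_eq_mul, ← Finset.card_univ]
  refine Finset.sum_le_card_nsmul _ _ _ fun x _ ↦ ?_
  have hroots : {y | s.evalEval x y = 0} ⊆ ((s.map (evalRingHom x)).roots.toFinset : Set K) := by
    intro y hy
    simpa [(hs.map _).ne_zero, map_evalRingHom_eval] using hy
  calc Nat.card {y // s.evalEval x y = 0}
      ≤ (s.map (evalRingHom x)).roots.toFinset.card := by
        rw [← Set.ncard_coe_finset]
        exact Set.ncard_le_ncard hroots
    _ ≤ (s.map (evalRingHom x)).natDegree := (Multiset.toFinset_card_le _).trans (card_roots' _)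
    _ = s.natDegree := hs.natDegree_map _

variable {σ k : Type*} [Field k]

theorem exists_card_slice_le {P : (PairRing σ k)[X]} (hP : P.Monic) (hirr : Irreducible P)
    (h0 : restrictDiagonal P = 0) (h1 : restrictDiagonal (derivative P) ≠ 0) (p : ℕ)
    [Fact p.Prime] [CharP k p] :
    ∃ W : PairRing σ k, W ≠ 0 ∧ ∃ C : ℕ, ∀ (K : Type*) [Field K] [Fintype K] [Algebra k K]
      (a b : ℕ), Fintype.card K = p ^ a * p ^ b → p ^ a ≤ p ^ b → C ≤ p ^ a →
      ∀ w : Option σ ⊕ σ → K, MvPolynomial.aeval w W ≠ 0 →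
        Nat.card {z : K × K // evalAt (scalePair z.1 w) z.2 P = 0} ≤
          Fintype.card K + C * p ^ b := by
  set S := P.map slice.toRingHom with hS
  have hSm : S.Monic := hP.map _
  obtain ⟨W, hW, hspec⟩ := exists_ne_zero_minpoly_eq_map hSm (a := 1)
    (x := MvPolynomial.X (Sum.inl none))
    (by rwa [hS, map_slice_map_evalRingHom_one])
    (by rw [hS, eval_map_slice_zero, h0, map_zero])
    (by
      rw [derivative_map, derivative_map, eval_map_slice_zero]
      exact (map_ne_zero_iff _ (MvPolynomial.rename_injective _ Sum.inl_injective)).2 h1)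
  let D := (Bivariate.swap S).natDegree
  let e := S.natDegree
  refine ⟨W, hW, (2 * (D * e ^ 2) + 1) * (e * (2 * (D * e ^ 2) + 4)) + D * e ^ 2 + e + 1 +
    (1 + e * (2 * (D * e ^ 2) + 4)), fun K _ _ _ a b hq hab hC w hw ↦ ?_⟩
  have : CharP K p := charP_of_injective_algebraMap (algebraMap k K).injective p
  obtain ⟨α, hα, hmin⟩ := hspec K (MvPolynomial.aeval w).toRingHom hw
  have hcard := card_evalEval_minpoly_eq_zero_le hα (D := D) (e := e)
    (by rw [hmin, hSm.natDegree_map])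
    (fun j ↦ by
      rw [hmin, coeff_map, coe_mapRingHom]
      exact natDegree_map_le.trans (natDegree_swap_le_iff.1 le_rfl j))
    p hq hab ((Nat.le_add_right _ _).trans hC)
  simp only [hmin, hS, evalEval_map_slice] at hcard
  refine hcard.trans (Nat.add_le_add_left ?_ _)
  rw [mul_comm]
  exact Nat.mul_le_mul_right _ (Nat.le_add_left _ _)

/-- Each zero `(v, v')` of `P` lies on `q - 1` of the parametrized lines through `v`, one for each
nonzero value of the parameter at `v'`. -/
theorem card_mul_card_evalAt_eq_zero_le [Fintype σ] [DecidableEq σ] (P : (PairRing σ k)[X])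
    (K : Type*) [Field K] [Fintype K] [Algebra k K] :
    (Fintype.card K - 1) * Nat.card {z : (Option σ ⊕ σ → K) × K // evalAt z.1 z.2 P = 0} ≤
      ∑ w : Option σ ⊕ σ → K, Nat.card {z : K × K // evalAt (scalePair z.1 w) z.2 P = 0} := by
  classical
  rw [← Nat.card_sigma, ← Nat.card_congr (Equiv.subtypeProdEquivSigmaSubtype
      fun (w : Option σ ⊕ σ → K) (z : K × K) ↦ evalAt (scalePair z.1 w) z.2 P = 0),
    ← Nat.card_eq_fintype_card, ← Nat.card_units, ← Nat.card_prod]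
  refine Nat.card_le_card_of_injective
    (fun x ↦ ⟨(scalePair (x.1 : K)⁻¹ x.2.1.1, (x.1, x.2.1.2)), ?_⟩) ?_
  · simpa only [scalePair_scalePair_inv x.1.ne_zero] using x.2.2
  · rintro ⟨t, ⟨w, u⟩, h⟩ ⟨t', ⟨w', u'⟩, h'⟩ heq
    simp only [Subtype.mk.injEq, Prod.mk.injEq, Units.val_inj] at heq
    obtain ⟨hw, rfl, rfl⟩ := heq
    have : w = w' := by
      simpa only [scalePair_scalePair_inv t.ne_zero] using congrArg (scalePair (t : K)) hw
    subst this
    rfl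

theorem exists_card_evalAt_eq_zero_le [Fintype σ] {P : (PairRing σ k)[X]} (hP : P.Monic)
    (hirr : Irreducible P) (h0 : restrictDiagonal P = 0)
    (h1 : restrictDiagonal (derivative P) ≠ 0) (p : ℕ) [Fact p.Prime] [CharP k p] :
    ∃ C : ℕ, ∀ (K : Type*) [Field K] [Fintype K] [Algebra k K] (a b : ℕ),
      Fintype.card K = p ^ a * p ^ b → p ^ a ≤ p ^ b → C ≤ p ^ a →
      (Fintype.card K - 1) * Nat.card {z : (Option σ ⊕ σ → K) × K // evalAt z.1 z.2 P = 0} ≤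
        Fintype.card K ^ Fintype.card (Option σ ⊕ σ) * (Fintype.card K + C * p ^ b) := by
  classical
  obtain ⟨W, hW, E, hE⟩ := exists_card_slice_le hP hirr h0 h1 p
  refine ⟨E + W.totalDegree * P.natDegree, fun K _ _ _ a b hq hab hC ↦ ?_⟩
  refine (card_mul_card_evalAt_eq_zero_le P K).trans ?_
  set q := Fintype.card K
  set N := Fintype.card (Option σ ⊕ σ)
  set B := Nat.card {w : Option σ ⊕ σ → K // MvPolynomial.aeval w W = 0} with hB
  have hbad (w : Option σ ⊕ σ → K) :
      Nat.card {z : K × K // evalAt (scalePair z.1 w) z.2 P = 0} ≤ P.natDegree * q := by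
    have hm := (hP.map (slice (σ := σ) (k := k)).toRingHom)
    have := card_evalEval_eq_zero_le (hm.map (mapRingHom (MvPolynomial.aeval w).toRingHom))
    rwa [hm.natDegree_map, hP.natDegree_map, funext fun z : K × K ↦ congrArg (· = 0)
      (evalEval_map_slice P w z.1 z.2)] at this
  calc ∑ w, Nat.card {z : K × K // evalAt (scalePair z.1 w) z.2 P = 0}
      ≤ ∑ w : Option σ ⊕ σ → K, ((q + E * p ^ b) +
          if MvPolynomial.aeval w W = 0 then P.natDegree * q else 0) := by
        refine Finset.sum_le_sum fun w _ ↦ ?_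
        split_ifs with hw
        · exact (hbad w).trans (Nat.le_add_left _ _)
        · exact hE K a b hq hab ((Nat.le_add_right _ _).trans hC) w hw
    _ = q ^ N * (q + E * p ^ b) + B * q * P.natDegree := by
        rw [hB, Nat.card_eq_fintype_card, Fintype.card_subtype, Finset.sum_add_distrib,
          ← Finset.sum_filter, Finset.sum_const, Finset.sum_const, Finset.card_univ,
          Fintype.card_fun, smul_eq_mul, smul_eq_mul]
        ring
    _ ≤ q ^ N * (q + E * p ^ b) + W.totalDegree * q ^ N * (P.natDegree * p ^ b) :=
        Nat.add_le_add_left (Nat.mul_le_mul (card_aeval_eq_zero_mul_card_le hW K)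
          (Nat.le_mul_of_pos_right _ (pow_pos (Fact.out : p.Prime).pos b))) _
    _ = q ^ N * (q + (E + W.totalDegree * P.natDegree) * p ^ b) := by ring

end Counting

/-! ### The component of `Q(v) = Q(v')` through the diagonal -/

section DiagonalComponent

theorem eq_zero_of_isIntegral_of_algHom_eq_zero {R B : Type*} [CommRing R] [IsDomain R]
    [CommRing B] [IsDomain B] [Algebra R B] (ψ : B →ₐ[R] R) {b : B} (hb : IsIntegral R b)
    (h : ψ b = 0) : b = 0 := by
  have hX : X ∣ minpoly R b := by
    rw [X_dvd_iff, coeff_zero_eq_aeval_zero]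
    simpa only [h, minpoly.aeval, map_zero] using aeval_algHom_apply ψ b (minpoly R b)
  have hmin : X = minpoly R b := eq_of_monic_of_associated monic_X (minpoly.monic hb)
    (irreducible_X.associated_of_dvd (minpoly.irreducible hb) hX)
  simpa only [← hmin, aeval_X] using minpoly.aeval R b

theorem exists_monic_irreducible_dvd_map_eq_zero {A B : Type*} [CommRing A] [IsDomain A]
    [UniqueFactorizationMonoid A] [CommRing B] [IsDomain B] (φ : A[X] →+* B) {F : A[X]}
    (hF : F.Monic) (h : φ F = 0) : ∃ P : A[X], P.Monic ∧ Irreducible P ∧ P ∣ F ∧ φ P = 0 := by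
  obtain ⟨s, hs, hassoc⟩ := UniqueFactorizationMonoid.exists_prime_factors F hF.ne_zero
  have hprod : (s.map φ).prod = 0 := by
    rw [Multiset.prod_hom, ← zero_dvd_iff, ← h]
    exact _root_.map_dvd φ hassoc.symm.dvd
  obtain ⟨P, hP, h0⟩ := Multiset.mem_map.1 (Multiset.prod_eq_zero_iff.1 hprod)
  have hdvd : P ∣ F := (Multiset.dvd_prod hP).trans hassoc.dvd
  have hu := hF.isUnit_leadingCoeff_of_dvd hdvd
  have hassocP : Associated (hu.unit⁻¹ • P) P := by
    rw [Units.smul_def, smul_eq_C_mul]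
    exact associated_unit_mul_left P _ (isUnit_C.2 (Units.isUnit _))
  refine ⟨hu.unit⁻¹ • P, monic_of_isUnit_leadingCoeff_inv_smul hu,
    hassocP.symm.irreducible (hs P hP).irreducible, hassocP.dvd.trans hdvd, ?_⟩
  rw [← zero_dvd_iff, ← h0]
  exact _root_.map_dvd φ hassocP.symm.dvd

variable {σ k : Type*}

section CommRing

variable [CommRing k]

/-- The polynomial `Q(v') - Q(v)` in the coordinates of two points `v` and `v'`. -/
noncomputable def difference (Q : (MvPolynomial σ k)[X]) : (PairRing σ k)[X] :=
  Q.map (MvPolynomial.rename Sum.inr).toRingHom -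
    C (evalAt (fun i ↦ MvPolynomial.X (Sum.inl (some i))) (MvPolynomial.X (Sum.inl none)) Q)

theorem evalAt_difference {A : Type*} [CommRing A] [Algebra k A] (w : Option σ ⊕ σ → A) (x' : A)
    (Q : (MvPolynomial σ k)[X]) :
    evalAt w x' (difference Q) =
      evalAt (w ∘ Sum.inr) x' Q - evalAt (fun i ↦ w (Sum.inl (some i))) (w (Sum.inl none)) Q := by
  rw [difference, map_sub, evalAt_C, map_evalAt]
  congr 1
  · rw [← eval_map_aeval, ← eval_map_aeval, Polynomial.map_map]
    congr 2
    ext <;> simp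
  · simp [Function.comp_def]

theorem monic_difference {Q : (MvPolynomial σ k)[X]} (hQ : Q.Monic) (h : 0 < Q.natDegree) :
    (difference Q).Monic := by
  nontriviality k
  refine (hQ.map _).sub_of_left (degree_C_le.trans_lt ?_)
  rwa [← natDegree_pos_iff_degree_pos, hQ.natDegree_map]

theorem natDegree_difference {Q : (MvPolynomial σ k)[X]} (hQ : Q.Monic) :
    (difference Q).natDegree = Q.natDegree := by
  nontriviality k
  rw [difference, natDegree_sub_C, hQ.natDegree_map]

/-- The exchange of the two points `v` and `v'`. -/
noncomputable def swapPair : (PairRing σ k)[X] →ₐ[k] (PairRing σ k)[X] :=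
  evalAt
    (Sum.elim (fun o ↦ o.elim X fun i ↦ C (MvPolynomial.X (Sum.inr i)))
      fun i ↦ C (MvPolynomial.X (Sum.inl (some i))))
    (C (MvPolynomial.X (Sum.inl none)))

theorem evalAt_swapPair {A : Type*} [CommRing A] [Algebra k A] (w : Option σ ⊕ σ → A) (x' : A)
    (P : (PairRing σ k)[X]) :
    evalAt w x' (swapPair P) =
      evalAt (Sum.elim (fun o ↦ o.elim x' (w ∘ Sum.inr)) fun i ↦ w (Sum.inl (some i)))
        (w (Sum.inl none)) P := by
  rw [swapPair, map_evalAt]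
  congr 2
  · ext ((_ | i) | i) <;> simp
  · simp

theorem evalAt_C_X_X (P : (PairRing σ k)[X]) :
    evalAt (A := (PairRing σ k)[X]) (fun i ↦ C (MvPolynomial.X i)) X P = P :=
  congr($(show evalAt (A := (PairRing σ k)[X]) (fun i ↦ C (MvPolynomial.X i)) X =
    AlgHom.id k (PairRing σ k)[X] by ext : 2 <;> simp) P)

theorem swapPair_swapPair (P : (PairRing σ k)[X]) : swapPair (swapPair P) = P := by
  conv_rhs => rw [← evalAt_C_X_X P]
  rw [swapPair, map_evalAt, ← swapPair]
  congr 2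
  · ext ((_ | i) | i) : 1 <;> simp [swapPair]
  · simp [swapPair]

theorem swapPair_difference (Q : (MvPolynomial σ k)[X]) :
    swapPair (difference Q) = -difference Q := by
  conv_rhs => rw [← evalAt_C_X_X (difference Q), evalAt_difference]
  rw [swapPair, evalAt_difference, neg_sub]
  rfl

theorem restrictDiagonal_swapPair (P : (PairRing σ k)[X]) :
    restrictDiagonal (swapPair P) = restrictDiagonal P := by
  rw [restrictDiagonal, evalAt_swapPair]
  congr 2
  ext1 ((_ | i) | i) <;> rfl

theorem restrictDiagonal_difference (Q : (MvPolynomial σ k)[X]) :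
    restrictDiagonal (difference Q) = 0 := by
  rw [restrictDiagonal, evalAt_difference]
  exact sub_self _

theorem restrictDiagonal_derivative_difference_ne_zero {Q : (MvPolynomial σ k)[X]}
    (hQ : derivative Q ≠ 0) : restrictDiagonal (derivative (difference Q)) ≠ 0 := by
  have hext : (evalAt (MvPolynomial.X ∘ some) (MvPolynomial.X none) :
      (MvPolynomial σ k)[X] →ₐ[k] MvPolynomial (Option σ) k) =
        (MvPolynomial.optionEquivLeft k σ).symm := by
    ext <;> simp
  have hres : restrictDiagonal (derivative (difference Q)) =
      (MvPolynomial.optionEquivLeft k σ).symm (derivative Q) := by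
    rw [difference, derivative_sub, derivative_C, sub_zero, derivative_map, restrictDiagonal,
      ← eval_map_aeval, Polynomial.map_map]
    refine Eq.trans ?_ congr($hext (derivative Q))
    rw [← eval_map_aeval]
    congr 2
    ext <;> simp
  rwa [hres, map_ne_zero_iff _ (AlgEquiv.injective _)]

end CommRing

variable [Field k]

theorem natDegree_pos_of_derivative_ne_zero {R : Type*} [Semiring R] {Q : R[X]}
    (hQ : derivative Q ≠ 0) : 0 < Q.natDegree :=
  Nat.pos_of_ne_zero fun h ↦ hQ (derivative_of_natDegree_zero h)

theorem exists_irreducible_dvd_difference {Q : (MvPolynomial σ k)[X]} (hQ : Q.Monic)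
    (hQ' : derivative Q ≠ 0) :
    ∃ P : (PairRing σ k)[X], P.Monic ∧ Irreducible P ∧ P ∣ difference Q ∧
      restrictDiagonal P = 0 ∧ restrictDiagonal (derivative P) ≠ 0 ∧
        ∃ u : k, u ≠ 0 ∧ swapPair P = u • P := by
  obtain ⟨P, hPm, hirr, ⟨h, hh⟩, hP0⟩ := exists_monic_irreducible_dvd_map_eq_zero
    (restrictDiagonal (σ := σ) (k := k)).toRingHom
    (monic_difference hQ (natDegree_pos_of_derivative_ne_zero hQ')) (restrictDiagonal_difference Q)
  change restrictDiagonal P = 0 at hP0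
  have hprod : restrictDiagonal (derivative P) * restrictDiagonal h ≠ 0 := by
    convert restrictDiagonal_derivative_difference_ne_zero hQ'
    rw [hh, derivative_mul, map_add, map_mul, map_mul, hP0, zero_mul, add_zero]
  have hdvd : P ∣ swapPair P := by
    have hmul : P ∣ swapPair P * swapPair h := by
      rw [← map_mul, ← hh, swapPair_difference, hh]
      exact (dvd_mul_right P h).neg_right
    refine (hirr.prime.dvd_or_dvd hmul).resolve_right fun ⟨r, hr⟩ ↦ ?_
    refine right_ne_zero_of_mul hprod ?_
    rw [← restrictDiagonal_swapPair, hr, map_mul, hP0, zero_mul]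
  have hdvd' : swapPair P ∣ P := by
    simpa only [swapPair_swapPair] using _root_.map_dvd swapPair hdvd
  obtain ⟨v, hv⟩ := associated_of_dvd_dvd hdvd hdvd'
  obtain ⟨f, hf, hfv⟩ := Polynomial.isUnit_iff.1 v.isUnit
  obtain ⟨u, hu, rfl⟩ := MvPolynomial.isUnit_iff_eq_C_of_isReduced.1 hf
  refine ⟨P, hPm, hirr, ⟨h, hh⟩, hP0, left_ne_zero_of_mul hprod, u, hu.ne_zero, ?_⟩
  rw [← hv, ← hfv, mul_comm, ← MvPolynomial.algebraMap_eq, ← Polynomial.algebraMap_apply,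
    Algebra.smul_def, Polynomial.algebraMap_apply]

/-- The restriction of a polynomial function of `(v, v')` to `v = 0`, as a polynomial in `v'`. -/
noncomputable def restrictZero (P : (PairRing σ k)[X]) : (MvPolynomial σ k)[X] :=
  P.map (MvPolynomial.aeval (Sum.elim 0 MvPolynomial.X)).toRingHom

theorem evalAt_restrictZero {A : Type*} [CommRing A] [Algebra k A] (y : σ → A) (x : A)
    (P : (PairRing σ k)[X]) : evalAt y x (restrictZero P) = evalAt (Sum.elim 0 y) x P := by
  rw [restrictZero, ← eval_map_aeval, ← eval_map_aeval, Polynomial.map_map]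
  congr 2
  apply MvPolynomial.ringHom_ext
  · intro r
    simp
  · rintro (i | i) <;> simp

/-- `P(v'; 0, T)` is a monic divisor of `Q(0, T) - Q(v')`, and `Q(v') = Q(v)` on `B`, so the
coefficients of `P(v'; 0, T)` are integral over the functions of `v`; the constant one is
`P(v'; 0, 0)`, which by symmetry is a multiple of `P(0, 0; v')`. -/
theorem isIntegral_map_restrictZero {R B : Type*} [CommRing R] [Algebra k R] [CommRing B]
    [Algebra k B] [Algebra R B] [IsScalarTower k R B] {Q : (MvPolynomial σ k)[X]} (hQ : Q.Monic)
    (hQ0 : 0 < Q.natDegree) {P : (PairRing σ k)[X]} (hP : P.Monic) (hdvd : P ∣ difference Q)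
    {u : k} (hu : u ≠ 0) (hswap : swapPair P = u • P) (v : Option σ → R) {y : σ → B} {x : B}
    (hroot : evalAt (Sum.elim (algebraMap R B ∘ v) y) x P = 0) :
    IsIntegral R (evalAt y x (restrictZero P)) := by
  nontriviality R
  let θ : PairRing σ k →ₐ[k] B := MvPolynomial.aeval (Sum.elim (fun o ↦ o.elim x y) 0)
  let q : R := evalAt (v ∘ some) (v none) Q
  let m : R[X] := Q.map (MvPolynomial.aeval (0 : σ → R)).toRingHom - C q
  have hm : m.Monic := by
    refine (hQ.map _).sub_of_left (degree_C_le.trans_lt ?_)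
    rwa [← natDegree_pos_iff_degree_pos, hQ.natDegree_map]
  have hq : evalAt y x Q = algebraMap R B q := by
    have h := _root_.map_dvd (evalAt (Sum.elim (algebraMap R B ∘ v) y) x) hdvd
    rw [hroot, zero_dvd_iff, evalAt_difference, sub_eq_zero] at h
    exact h.trans (map_evalAt (IsScalarTower.toAlgHom k R B) _ _ Q).symm
  have hmap : (difference Q).map θ.toRingHom = m.map (algebraMap R B) := by
    rw [difference, Polynomial.map_sub, Polynomial.map_sub, Polynomial.map_map,
      Polynomial.map_map, map_C, map_C, ← hq]
    congr 2
    · apply MvPolynomial.ringHom_ext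
      · intro r
        simp [θ, ← IsScalarTower.algebraMap_apply]
      · simp [θ]
    · refine (map_evalAt θ _ _ Q).trans ?_
      simp [θ, Function.comp_def]
  have hint := isIntegral_coeff_of_dvd m (P.map θ.toRingHom) hm (hP.map _)
    (hmap ▸ Polynomial.map_dvd _ hdvd) 0
  have hcoeff : (P.map θ.toRingHom).coeff 0 = u • evalAt y x (restrictZero P) := by
    rw [coeff_zero_eq_eval_zero, eval_map_aeval, evalAt_restrictZero, ← map_smul, ← hswap,
      evalAt_swapPair]
    congr 2
  rw [hcoeff] at hint
  simpa only [smul_smul, inv_mul_cancel₀ hu, one_smul] using hint.smul u⁻¹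

theorem algHom_difference_restrictZero_eq_zero {B : Type*} [CommRing B] [IsDomain B] [Algebra k B]
    {Q : (MvPolynomial σ k)[X]} (hQ : Q.Monic) (hQ0 : 0 < Q.natDegree) {P : (PairRing σ k)[X]}
    (hP : P.Monic) (hdvd : P ∣ difference Q) {u : k} (hu : u ≠ 0) (hswap : swapPair P = u • P)
    {π : (PairRing σ k)[X] →ₐ[k] B} (hπ : π P = 0) {ψ : B →ₐ[k] MvPolynomial (Option σ) k}
    (hψ : ψ.comp π = restrictDiagonal) : π (difference (restrictZero P)) = 0 := by
  let ι : MvPolynomial (Option σ) k →ₐ[k] B := π.comp (CAlgHom.comp (MvPolynomial.rename Sum.inl))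
  let : Algebra (MvPolynomial (Option σ) k) B := ι.toAlgebra
  have : IsScalarTower k (MvPolynomial (Option σ) k) B :=
    IsScalarTower.of_algebraMap_eq fun r ↦ (ι.commutes r).symm
  have hψι : ψ.comp ι = AlgHom.id k _ := by
    rw [← AlgHom.comp_assoc, hψ]
    ext o
    cases o <;> simp [restrictDiagonal]
  let ψ' : B →ₐ[MvPolynomial (Option σ) k] MvPolynomial (Option σ) k :=
    { ψ with commutes' := fun r ↦ congr($hψι r) }
  have hb (F : (PairRing σ k)[X]) : π F = evalAt
      (Sum.elim (algebraMap (MvPolynomial (Option σ) k) B ∘ MvPolynomial.X)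
        fun i ↦ π (C (MvPolynomial.X (Sum.inr i)))) (π X) F := by
    conv_lhs => rw [← evalAt_C_X_X F, map_evalAt]
    congr 2
    ext (o | i)
    · simp [RingHom.algebraMap_toAlgebra, ι]
    · rfl
  have hint : IsIntegral (MvPolynomial (Option σ) k) (π (difference (restrictZero P))) := by
    rw [hb, evalAt_difference]
    refine (isIntegral_map_restrictZero hQ hQ0 hP hdvd hu hswap _ ((hb P).symm.trans hπ)).sub ?_
    have h := map_evalAt (IsScalarTower.toAlgHom k (MvPolynomial (Option σ) k) B)
      (MvPolynomial.X ∘ some) (MvPolynomial.X none) (restrictZero P)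
    exact h ▸ isIntegral_algebraMap
  exact eq_zero_of_isIntegral_of_algHom_eq_zero ψ' hint <|
    congr($hψ _).trans (restrictDiagonal_difference _)

theorem difference_restrictZero_eq {Q : (MvPolynomial σ k)[X]} (hQ : Q.Monic)
    (hQ0 : 0 < Q.natDegree) {P : (PairRing σ k)[X]} (hP : P.Monic) (hirr : Irreducible P)
    (hdvd : P ∣ difference Q) (h0 : restrictDiagonal P = 0) {u : k} (hu : u ≠ 0)
    (hswap : swapPair P = u • P) : difference (restrictZero P) = P := by
  have : (Ideal.span {P}).IsPrime := (Ideal.span_singleton_prime hP.ne_zero).2 hirr.prime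
  have hker (F) (hF : F ∈ Ideal.span {P}) : restrictDiagonal F = 0 := by
    obtain ⟨F, rfl⟩ := Ideal.mem_span_singleton.1 hF
    rw [map_mul, h0, zero_mul]
  have hmk : Ideal.Quotient.mkₐ k (Ideal.span {P}) (difference (restrictZero P)) = 0 :=
    algHom_difference_restrictZero_eq_zero (B := (PairRing σ k)[X] ⧸ Ideal.span {P})
      (π := Ideal.Quotient.mkₐ k (Ideal.span {P})) hQ hQ0 hP hdvd hu hswap
      (Ideal.Quotient.eq_zero_iff_mem.2 (Ideal.mem_span_singleton_self P))
      (Ideal.Quotient.liftₐ_comp (Ideal.span {P}) restrictDiagonal hker)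
  have hdvd' : P ∣ difference (restrictZero P) :=
    Ideal.mem_span_singleton.1 (Ideal.Quotient.eq_zero_iff_mem.1 hmk)
  have hG : (restrictZero P).Monic := hP.map _
  have hdeg : (restrictZero P).natDegree = P.natDegree := hP.natDegree_map _
  refine eq_of_monic_of_dvd_of_natDegree_le hP (monic_difference hG ?_) hdvd' ?_
  · rw [hdeg]
    refine Nat.pos_of_ne_zero fun h ↦ hirr.not_isUnit ?_
    rw [hP.natDegree_eq_zero.1 h]
    exact isUnit_one
  · rw [natDegree_difference hG, hdeg]

theorem exists_irreducible_difference_dvd_difference {Q : (MvPolynomial σ k)[X]} (hQ : Q.Monic)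
    (hQ' : derivative Q ≠ 0) :
    ∃ G : (MvPolynomial σ k)[X], (difference G).Monic ∧ Irreducible (difference G) ∧
      difference G ∣ difference Q ∧ restrictDiagonal (derivative (difference G)) ≠ 0 := by
  obtain ⟨P, hP, hirr, hdvd, h0, h1, u, hu, hswap⟩ := exists_irreducible_dvd_difference hQ hQ'
  refine ⟨restrictZero P, ?_⟩
  rw [difference_restrictZero_eq hQ (natDegree_pos_of_derivative_ne_zero hQ') hP hirr hdvd h0 hu
    hswap]
  exact ⟨hP, hirr, hdvd, h1⟩

end DiagonalComponent

/-! ### Fiber deviation of a map of finite sets -/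

section FiberDeviation

variable {X Y Z : Type*}

/-- The probability that `f x = y` for a uniformly distributed `x`; it is `0` if there is no `x`. -/
noncomputable def fiberDensity (f : X → Y) (y : Y) : ℝ :=
  (Nat.card {x // f x = y} : ℝ) / Nat.card X

/-- The `L¹` distance between the distribution of `f x`, for a uniformly distributed `x`, and the
uniform distribution. -/
noncomputable def fiberDeviation (f : X → Y) : ℝ :=
  ∑ᶠ y, |fiberDensity f y - (Nat.card Y : ℝ)⁻¹|

theorem fiberDeviation_eq_sum [Fintype Y] (f : X → Y) :
    fiberDeviation f = ∑ y, |fiberDensity f y - (Nat.card Y : ℝ)⁻¹| :=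
  finsum_eq_sum_of_fintype _

theorem card_fiber_comp [Finite X] [Fintype Y] [DecidableEq Z] (g : X → Y) (h : Y → Z) (z : Z) :
    Nat.card {x // h (g x) = z} = ∑ y with h y = z, Nat.card {x // g x = y} := by
  classical
  cases nonempty_fintype X
  simp only [Nat.card_eq_fintype_card, Fintype.card_subtype]
  rw [Finset.card_eq_sum_card_fiberwise (f := g) (t := {y | h y = z}) (by intro x; simp)]
  refine Finset.sum_congr rfl fun y hy ↦ congrArg _ (Finset.ext fun x ↦ ?_)
  have hy : h y = z := by simpa using hy
  rw [Finset.mem_filter, Finset.mem_filter_univ, Finset.mem_filter_univ, and_iff_right_iff_imp]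
  rintro rfl
  exact hy

theorem fiberDensity_comp [Finite X] [Fintype Y] [DecidableEq Z] (g : X → Y) (h : Y → Z) (z : Z) :
    fiberDensity (h ∘ g) z = ∑ y with h y = z, fiberDensity g y := by
  simp only [fiberDensity, Function.comp_apply, card_fiber_comp g h z, Nat.cast_sum,
    Finset.sum_div]

theorem fiberDensity_eq_sum [Fintype Y] [DecidableEq Z] (h : Y → Z) (z : Z) :
    fiberDensity h z = ∑ y with h y = z, (Nat.card Y : ℝ)⁻¹ := by
  rw [fiberDensity, Nat.card_eq_fintype_card, Fintype.card_subtype, Finset.sum_const, nsmul_eq_mul,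
    div_eq_mul_inv]

theorem sum_fiberDensity [Finite X] [Nonempty X] [Fintype Y] (f : X → Y) :
    ∑ y, fiberDensity f y = 1 := by
  have h : fiberDensity ((fun _ ↦ ()) ∘ f) () = 1 := by
    rw [fiberDensity, Nat.card_congr (Equiv.subtypeUnivEquiv fun _ ↦ rfl), div_self]
    exact_mod_cast Nat.card_pos.ne'
  rw [← h, fiberDensity_comp, Finset.filter_true_of_mem fun _ _ ↦ rfl]

theorem sum_abs_fiberDensity_comp_sub_le [Finite X] [Finite Y] [Fintype Z] (g : X → Y)
    (h : Y → Z) :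
    ∑ z, |fiberDensity (h ∘ g) z - fiberDensity h z| ≤ fiberDeviation g := by
  classical
  cases nonempty_fintype Y
  rw [fiberDeviation_eq_sum, ← Finset.sum_fiberwise _ h]
  refine Finset.sum_le_sum fun z _ ↦ ?_
  rw [fiberDensity_comp, fiberDensity_eq_sum, ← Finset.sum_sub_distrib]
  exact Finset.abs_sum_le_sum_abs _ _

theorem fiberDeviation_comp_le [Finite X] [Finite Y] [Finite Z] (g : X → Y) (h : Y → Z) :
    fiberDeviation (h ∘ g) ≤ fiberDeviation g + fiberDeviation h := by
  cases nonempty_fintype Z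
  refine le_trans ?_ (add_le_add_left (sum_abs_fiberDensity_comp_sub_le g h) _)
  rw [fiberDeviation_eq_sum, fiberDeviation_eq_sum, ← Finset.sum_add_distrib]
  exact Finset.sum_le_sum fun z _ ↦ abs_sub_le _ _ _

theorem fiberDeviation_le_comp_add [Finite X] [Finite Y] [Finite Z] (g : X → Y) (h : Y → Z) :
    fiberDeviation h ≤ fiberDeviation g + fiberDeviation (h ∘ g) := by
  cases nonempty_fintype Z
  refine le_trans ?_ (add_le_add_left (sum_abs_fiberDensity_comp_sub_le g h) _)
  rw [fiberDeviation_eq_sum, fiberDeviation_eq_sum, ← Finset.sum_add_distrib]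
  refine Finset.sum_le_sum fun z _ ↦ ?_
  rw [abs_sub_comm (fiberDensity (h ∘ g) z)]
  exact abs_sub_le _ _ _

theorem card_collisions_eq_sum_sq [Finite X] [Fintype Y] (f : X → Y) :
    Nat.card {x : X × X // f x.1 = f x.2} = ∑ y, Nat.card {x // f x = y} ^ 2 := by
  classical
  rw [Nat.card_congr (Equiv.sigmaFiberEquiv fun x : {x : X × X // f x.1 = f x.2} ↦ f x.1.1).symm,
    Nat.card_sigma]
  refine Finset.sum_congr rfl fun y _ ↦ ?_
  rw [sq, ← Nat.card_prod]
  exact Nat.card_congr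
    { toFun x := (⟨x.1.1.1, x.2⟩, ⟨x.1.1.2, x.1.2.symm.trans x.2⟩)
      invFun x := ⟨⟨(x.1.1, x.2.1), x.1.2.trans x.2.2.symm⟩, x.1.2⟩
      left_inv _ := rfl
      right_inv _ := rfl }

theorem fiberDeviation_le_sqrt [Finite X] [Nonempty X] [Finite Y] (f : X → Y) {η : ℝ}
    (h : (Nat.card {x : X × X // f x.1 = f x.2} : ℝ) * Nat.card Y ≤ Nat.card X ^ 2 * (1 + η)) :
    fiberDeviation f ≤ √η := by
  cases nonempty_fintype Y
  have hY : (0 : ℝ) < Nat.card Y :=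
    have := Nonempty.map f inferInstance
    mod_cast Nat.card_pos
  have hX : (0 : ℝ) < Nat.card X := mod_cast Nat.card_pos
  have hvar : ∑ y, |fiberDensity f y - (Nat.card Y : ℝ)⁻¹| ^ 2 =
      Nat.card {x : X × X // f x.1 = f x.2} / (Nat.card X : ℝ) ^ 2 - (Nat.card Y : ℝ)⁻¹ := by
    have hsq : ∑ y, fiberDensity f y ^ 2 =
        Nat.card {x : X × X // f x.1 = f x.2} / (Nat.card X : ℝ) ^ 2 := by
      simp only [card_collisions_eq_sum_sq, fiberDensity, div_pow, Nat.cast_sum, Nat.cast_pow,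
        Finset.sum_div]
    simp only [sq_abs, sub_sq, Finset.sum_add_distrib, Finset.sum_sub_distrib, hsq,
      ← Finset.sum_mul, ← Finset.mul_sum, sum_fiberDensity, Finset.sum_const, Finset.card_univ,
      nsmul_eq_mul, ← Nat.card_eq_fintype_card]
    field_simp
    ring
  rw [fiberDeviation_eq_sum]
  refine Real.le_sqrt_of_sq_le ?_
  calc (∑ y, |fiberDensity f y - (Nat.card Y : ℝ)⁻¹|) ^ 2
      ≤ Nat.card Y * ∑ y, |fiberDensity f y - (Nat.card Y : ℝ)⁻¹| ^ 2 := by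
        rw [Nat.card_eq_fintype_card]
        exact sq_sum_le_card_mul_sum_sq
    _ = Nat.card {x : X × X // f x.1 = f x.2} * Nat.card Y / (Nat.card X : ℝ) ^ 2 - 1 := by
        rw [hvar]
        field_simp
    _ ≤ η := by
        rw [sub_le_iff_le_add', div_le_iff₀ (by positivity)]
        linarith

theorem fiberDeviation_le_two_mul_sum [Finite X] [Nonempty X] [Fintype Y] (f : X → Y) {δ : Y → ℝ}
    (hδ : ∀ y, 0 ≤ δ y) (h : ∀ y, (Nat.card Y : ℝ)⁻¹ ≤ fiberDensity f y + δ y) :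
    fiberDeviation f ≤ 2 * ∑ y, δ y := by
  have hY : (Nat.card Y : ℝ) ≠ 0 :=
    have := Nonempty.map f inferInstance
    mod_cast Nat.card_pos.ne'
  calc fiberDeviation f
      ≤ ∑ y, (fiberDensity f y - (Nat.card Y : ℝ)⁻¹ + 2 * δ y) := by
        rw [fiberDeviation_eq_sum]
        exact Finset.sum_le_sum fun y _ ↦ abs_le.2 ⟨by linarith [h y], by linarith [hδ y]⟩
    _ = 2 * ∑ y, δ y := by
        rw [Finset.sum_add_distrib, Finset.sum_sub_distrib, sum_fiberDensity, Finset.sum_const,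
          Finset.card_univ, nsmul_eq_mul, ← Nat.card_eq_fintype_card, mul_inv_cancel₀ hY, sub_self,
          zero_add, Finset.mul_sum]

theorem fiberDeviation_le_of_le_card_fiber [Finite X] [Nonempty X] [Finite Y] (f : X → Y) {c : ℕ}
    (h : ∀ y, c ≤ Nat.card {x // f x = y}) :
    fiberDeviation f ≤ 2 * (1 - c * Nat.card Y / Nat.card X) := by
  cases nonempty_fintype Y
  have hX : (0 : ℝ) < Nat.card X := mod_cast Nat.card_pos
  have hY : (0 : ℝ) < Nat.card Y :=
    have := Nonempty.map f inferInstance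
    mod_cast Nat.card_pos
  have hdens (y : Y) : (c : ℝ) / Nat.card X ≤ fiberDensity f y := by
    rw [fiberDensity]
    gcongr
    exact h y
  have hc : (c : ℝ) / Nat.card X ≤ (Nat.card Y : ℝ)⁻¹ := by
    rw [← one_div, le_div_iff₀ hY, ← sum_fiberDensity f, mul_comm,
      Nat.card_eq_fintype_card (α := Y), ← nsmul_eq_mul]
    exact Finset.card_nsmul_le_sum _ _ _ fun y _ ↦ hdens y
  refine (fiberDeviation_le_two_mul_sum f (δ := fun _ ↦ (Nat.card Y : ℝ)⁻¹ - c / Nat.card X)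
    (fun _ ↦ sub_nonneg.2 hc) fun y ↦ by linarith [hdens y]).trans_eq ?_
  rw [Finset.sum_const, Finset.card_univ, nsmul_eq_mul, ← Nat.card_eq_fintype_card]
  field_simp

theorem fiberDeviation_le_of_card_range [Finite Y] [Nonempty Y] (h : Y → Y) :
    fiberDeviation h ≤ 2 * (Nat.card Y - Nat.card (Set.range h)) / Nat.card Y := by
  classical
  cases nonempty_fintype Y
  have hdens (z : Y) : (Nat.card Y : ℝ)⁻¹ ≤
      fiberDensity h z + if z ∈ Set.range h then 0 else (Nat.card Y : ℝ)⁻¹ := by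
    split_ifs with hz
    · obtain ⟨y, rfl⟩ := hz
      rw [add_zero, fiberDensity_eq_sum]
      exact Finset.single_le_sum (f := fun _ ↦ (Nat.card Y : ℝ)⁻¹) (fun _ _ ↦ by positivity)
        (Finset.mem_filter_univ y |>.2 rfl)
    · exact le_add_of_nonneg_left (by unfold fiberDensity; positivity)
  refine (fiberDeviation_le_two_mul_sum h (fun z ↦ by positivity) hdens).trans_eq ?_
  rw [Finset.sum_ite, Finset.sum_const_zero, zero_add, Finset.sum_const, nsmul_eq_mul,
    ← Fintype.card_subtype, Fintype.card_subtype_compl, Nat.cast_sub (Fintype.card_subtype_le _),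
    ← Nat.card_eq_fintype_card, ← Nat.card_eq_fintype_card]
  exact (mul_assoc _ _ _).symm

theorem fiberDeviation_le_of_factorsThrough [Finite X] [Nonempty X] [Finite Y] {f g : X → Y}
    (hfg : f.FactorsThrough g) :
    fiberDeviation f ≤
      fiberDeviation g + 2 * (Nat.card Y - Nat.card (Set.range f)) / Nat.card Y := by
  have : Nonempty Y := Nonempty.map f inferInstance
  obtain ⟨h, rfl⟩ := (Function.factorsThrough_iff f).1 hfg
  refine (fiberDeviation_comp_le g h).trans
    (add_le_add_right ((fiberDeviation_le_of_card_range h).trans ?_) _)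
  have := Nat.card_mono (Set.toFinite (Set.range h)) (Set.range_comp_subset_range g h)
  gcongr

theorem sum_abs_fiberDensity_sub_le [Finite X] [Fintype Y] [Finite Z] [DecidableEq Z]
    (f : X → Y) (τ : Y → Z) (E : Finset Z)
    (hf : ∀ y y', τ y ∉ E → τ y = τ y' → fiberDensity f y = fiberDensity f y') :
    ∑ y with τ y ∉ E, |fiberDensity f y - (Nat.card Y : ℝ)⁻¹| ≤
      fiberDeviation (τ ∘ f) + fiberDeviation τ := by
  cases nonempty_fintype Z
  have hfiber (z : Z) :
      ∑ y ∈ {y | τ y ∉ E} with τ y = z, |fiberDensity f y - (Nat.card Y : ℝ)⁻¹| ≤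
        |fiberDensity (τ ∘ f) z - fiberDensity τ z| := by
    obtain h | ⟨y₀, h₀⟩ := ({y ∈ {y | τ y ∉ E} | τ y = z} : Finset Y).eq_empty_or_nonempty
    · rw [h, Finset.sum_empty]
      exact abs_nonneg _
    obtain ⟨h₀E, rfl⟩ : τ y₀ ∉ E ∧ τ y₀ = z := by simpa using h₀
    have hfilter : ({y ∈ ({y | τ y ∉ E} : Finset Y) | τ y = τ y₀} : Finset Y) =
        ({y | τ y = τ y₀} : Finset Y) := by
      ext y
      simp +contextual [h₀E]
    have hconst : ∀ y ∈ ({y | τ y = τ y₀} : Finset Y), fiberDensity f y = fiberDensity f y₀ :=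
      fun y hy ↦ (hf y₀ y h₀E (Finset.mem_filter_univ y |>.1 hy).symm).symm
    rw [hfilter, fiberDensity_comp, fiberDensity_eq_sum, ← Finset.sum_sub_distrib,
      Finset.sum_eq_card_nsmul (b := |fiberDensity f y₀ - (Nat.card Y : ℝ)⁻¹|)
        fun y hy ↦ by rw [hconst y hy],
      Finset.sum_eq_card_nsmul (b := fiberDensity f y₀ - (Nat.card Y : ℝ)⁻¹)
        fun y hy ↦ by rw [hconst y hy], abs_nsmul]
  rw [← Finset.sum_fiberwise _ τ, fiberDeviation_eq_sum, fiberDeviation_eq_sum,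
    ← Finset.sum_add_distrib]
  refine Finset.sum_le_sum fun z _ ↦ (hfiber z).trans ?_
  rw [abs_sub_comm (fiberDensity τ z)]
  exact abs_sub_le _ _ _

theorem isEquidistributed_of_sum_le [Finite X] [Nonempty X] [Fintype Y] [DecidableEq Y]
    {f : X → Y} {δ η : ℝ} (hδ : 0 < δ) (E : Finset Y)
    (hE : ∑ y with y ∉ E, |fiberDensity f y - (Nat.card Y : ℝ)⁻¹| ≤ η)
    (h : (E.card : ℝ) / Nat.card Y + η / δ < δ) : IsEquidistributed f δ := by
  have hY : (0 : ℝ) < Nat.card Y :=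
    have := Nonempty.map f inferInstance
    mod_cast Nat.card_pos
  have hX : (0 : ℝ) < Nat.card X := mod_cast Nat.card_pos
  let bad : Finset Y :=
    {y ∈ {y | y ∉ E} | δ / Nat.card Y ≤ |fiberDensity f y - (Nat.card Y : ℝ)⁻¹|}
  have hbad : (bad.card : ℝ) / Nat.card Y ≤ η / δ := by
    rw [le_div_iff₀ hδ, div_mul_comm, mul_comm, ← nsmul_eq_mul]
    refine (Finset.card_nsmul_le_sum _ _ _ fun y hy ↦ (Finset.mem_filter.1 hy).2).trans
      (le_trans ?_ hE)
    exact Finset.sum_le_sum_of_subset_of_nonneg (Finset.filter_subset _ _) fun _ _ _ ↦ abs_nonneg _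
  refine ⟨↑(E ∪ bad)ᶜ, ?_, fun y hy ↦ ?_⟩
  · have hcard : ((E ∪ bad).card : ℝ) < δ * Nat.card Y := by
      rw [← div_lt_iff₀ hY]
      refine lt_of_le_of_lt ?_ ((add_le_add_right hbad _).trans_lt h)
      rw [← add_div]
      gcongr
      exact_mod_cast Finset.card_union_le E bad
    rw [Nat.card_eq_card_toFinset, Finset.toFinset_coe, Finset.card_compl,
      Nat.cast_sub (Finset.card_le_univ _), ← Nat.card_eq_fintype_card]
    linarith
  · have hy : |fiberDensity f y - (Nat.card Y : ℝ)⁻¹| < δ / Nat.card Y := by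
      by_contra! hle
      simp only [Finset.coe_compl, Set.mem_compl_iff, SetLike.mem_coe, Finset.mem_union,
        not_or] at hy
      exact hy.2 (Finset.mem_filter.2 ⟨Finset.mem_filter_univ y |>.2 hy.1, hle⟩)
    have heq : (Nat.card {x // f x = y} : ℝ) - Nat.card X / Nat.card Y =
        Nat.card X * (fiberDensity f y - (Nat.card Y : ℝ)⁻¹) := by
      rw [fiberDensity]
      field_simp
    rw [heq, abs_mul, abs_of_pos hX, mul_comm δ, mul_div_assoc]
    gcongr

theorem card_preimage_div_le [Fintype Y] [Finite Z] [DecidableEq Z] (τ : Y → Z) (E : Finset Z) :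
    (Finset.card {y | τ y ∈ E} : ℝ) / Nat.card Y ≤
      (E.card : ℝ) / Nat.card Z + fiberDeviation τ := by
  cases nonempty_fintype Z
  have hcard : (Finset.card {y | τ y ∈ E} : ℝ) / Nat.card Y = ∑ z ∈ E, fiberDensity τ z := by
    rw [Finset.card_eq_sum_card_fiberwise (f := τ) (t := E) (by simp [Set.MapsTo]), Nat.cast_sum,
      Finset.sum_div]
    refine Finset.sum_congr rfl fun z hz ↦ ?_
    rw [fiberDensity, Nat.card_eq_fintype_card (α := {y // τ y = z}), Fintype.card_subtype,
      Finset.filter_filter]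
    congr! 5 with y
    exact and_iff_right_of_imp fun h ↦ h ▸ hz
  rw [hcard, fiberDeviation_eq_sum, div_eq_mul_inv, ← nsmul_eq_mul, ← Finset.sum_const]
  refine le_trans ?_ (add_le_add_right
    (Finset.sum_le_univ_sum_of_nonneg (s := E) fun _ ↦ abs_nonneg _) _)
  rw [← Finset.sum_add_distrib]
  refine Finset.sum_le_sum fun z _ ↦ ?_
  linarith [le_abs_self (fiberDensity τ z - (Nat.card Z : ℝ)⁻¹)]

theorem isEquidistributed_of_comp [Finite X] [Nonempty X] [Finite Y] [Finite Z]
    {f : X → Y} {τ : Y → Z} (E : Finset Z)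
    (hf : ∀ y y', τ y ∉ E → τ y = τ y' → fiberDensity f y = fiberDensity f y') {δ : ℝ} (hδ : 0 < δ)
    (h : (E.card : ℝ) / Nat.card Z + fiberDeviation τ +
      (fiberDeviation (τ ∘ f) + fiberDeviation τ) / δ < δ) : IsEquidistributed f δ := by
  classical
  cases nonempty_fintype Y
  exact isEquidistributed_of_sum_le hδ {y | τ y ∈ E}
    (by simpa using sum_abs_fiberDensity_sub_le f τ E hf)
    (lt_of_le_of_lt (add_le_add_left (card_preimage_div_le τ E) _) h)

end FiberDeviation

/-! ### Polynomial maps omitting at most two values -/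

section PthRoot

variable {σ k : Type*} (p : ℕ)

theorem exists_expand_eq_of_pderiv_eq_zero [CommRing k] [NoZeroDivisors k] [CharP k p]
    {f : MvPolynomial σ k} (hf : ∀ i, MvPolynomial.pderiv i f = 0) :
    ∃ g, MvPolynomial.expand p g = f := by
  have hdvd (d : σ →₀ ℕ) (hd : d ∈ f.support) (i : σ) : p ∣ d i := by
    obtain hi | hi := eq_or_ne (d i) 0
    · exact hi ▸ dvd_zero p
    have hle : Finsupp.single i 1 ≤ d := Finsupp.single_le_iff.2 (Nat.one_le_iff_ne_zero.2 hi)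
    have hcoeff := MvPolynomial.coeff_pderiv (i := i) f (d - Finsupp.single i 1)
    have hcast : (((d - Finsupp.single i 1 : σ →₀ ℕ) i : ℕ) : k) + 1 = (d i : k) := by
      rw [← Nat.cast_add_one, Finsupp.tsub_apply, Finsupp.single_eq_same,
        Nat.sub_add_cancel (Nat.one_le_iff_ne_zero.2 hi)]
    rw [hf i, MvPolynomial.coeff_zero, tsub_add_cancel_of_le hle, hcast] at hcoeff
    exact (CharP.cast_eq_zero_iff k p _).1 <|
      (mul_eq_zero.1 hcoeff.symm).resolve_left (MvPolynomial.mem_support_iff.1 hd)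
  refine ⟨∑ d ∈ f.support,
    MvPolynomial.monomial (d.mapRange (· / p) (Nat.zero_div p)) (f.coeff d), ?_⟩
  conv_rhs => rw [MvPolynomial.as_sum f]
  rw [map_sum]
  refine Finset.sum_congr rfl fun d hd ↦ ?_
  rw [MvPolynomial.expand_monomial]
  congr 2
  ext i
  exact Nat.mul_div_cancel' (hdvd d hd i)

theorem exists_pow_eq_pderiv_ne_zero [CommRing k] [IsDomain k] [hp : Fact p.Prime]
    [CharP k p] [PerfectRing k p] {f : MvPolynomial σ k} (hf : f.totalDegree ≠ 0) :
    ∃ (g : MvPolynomial σ k) (j : ℕ), g ^ p ^ j = f ∧ ∃ i, MvPolynomial.pderiv i g ≠ 0 := by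
  induction hd : f.totalDegree using Nat.strong_induction_on generalizing f with
  | _ d ih =>
    by_cases hder : ∃ i, MvPolynomial.pderiv i f ≠ 0
    · exact ⟨f, 0, by rw [pow_zero, pow_one], hder⟩
    push Not at hder
    obtain ⟨g, rfl⟩ := exists_expand_eq_of_pderiv_eq_zero p hder
    rw [MvPolynomial.totalDegree_expand] at hf hd
    have hg : g.totalDegree ≠ 0 := left_ne_zero_of_mul hf
    obtain ⟨h, j, rfl, i, hi⟩ := ih g.totalDegree
      (hd ▸ lt_mul_of_one_lt_right hg.bot_lt hp.out.one_lt) hg rfl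
    obtain ⟨h, rfl⟩ := MvPolynomial.map_surjective _ (surjective_frobenius k p) h
    refine ⟨h, j + 1, ?_, i, fun h0 ↦ hi (by rw [MvPolynomial.pderiv_map, h0, map_zero])⟩
    rw [map_pow, ← MvPolynomial.map_expand, MvPolynomial.map_frobenius_expand, ← pow_mul,
      pow_succ']

end PthRoot

section Shear

variable {σ k : Type*}

/-- Nagata's substitution `Xᵢ ↦ X ^ Nᵢ + Xᵢ`, which makes a polynomial monic in the new variable
`X`, up to a scalar, when the exponents `Nᵢ` grow fast. -/
noncomputable def shear [CommRing k] (N : σ → ℕ) : MvPolynomial σ k →ₐ[k] (MvPolynomial σ k)[X] :=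
  MvPolynomial.aeval fun i ↦ X ^ N i + C (MvPolynomial.X i)

theorem evalAt_shear [CommRing k] {A : Type*} [CommRing A] [Algebra k A] (N : σ → ℕ) (y : σ → A)
    (x : A) (f : MvPolynomial σ k) :
    evalAt y x (shear N f) = MvPolynomial.aeval (fun i ↦ x ^ N i + y i) f :=
  congr($(show (evalAt y x).comp (shear N) = MvPolynomial.aeval (R := k) (fun i ↦ x ^ N i + y i) by
    ext; simp [shear]) f)

theorem evalAt_C_sub_X_pow_shear [CommRing k] (N : σ → ℕ) (f : MvPolynomial σ k) :
    evalAt (fun i ↦ C (MvPolynomial.X i) - X ^ N i) X (shear N f) = C f := by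
  simp only [evalAt_shear, add_sub_cancel]
  exact congr($(show MvPolynomial.aeval (fun i ↦ C (MvPolynomial.X i)) =
    (CAlgHom (R := k) (A := MvPolynomial σ k)) by ext; simp) f)

theorem derivative_shear [CommRing k] [Fintype σ] {N : σ → ℕ} (hN : ∀ i, (N i : k) = 1)
    (f : MvPolynomial σ k) :
    derivative (shear N f) = ∑ i, shear N (MvPolynomial.pderiv i f) * X ^ (N i - 1) := by
  classical
  induction f using MvPolynomial.induction_on with
  | C a => simp [shear]
  | add f g hf hg => simp only [map_add, hf, hg, add_mul, Finset.sum_add_distrib]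
  | mul_X f i hf =>
    have hNi : (N i : (MvPolynomial σ k)) = 1 := by
      rw [← map_natCast MvPolynomial.C, hN, MvPolynomial.C_1]
    have hX : derivative (shear N (MvPolynomial.X i : MvPolynomial σ k)) = X ^ (N i - 1) := by
      simp [shear, derivative_X_pow, hNi]
    have hsum : ∑ j, shear N (f * MvPolynomial.pderiv j (MvPolynomial.X i)) * X ^ (N j - 1) =
        shear N f * X ^ (N i - 1) := by
      rw [Finset.sum_eq_single i (fun j _ hj ↦ ?_) (by simp), MvPolynomial.pderiv_X_self, mul_one]
      rw [MvPolynomial.pderiv_X_of_ne hj.symm, mul_zero, map_zero, zero_mul]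
    rw [map_mul, derivative_mul, hf, hX, ← hsum, Finset.sum_mul, ← Finset.sum_add_distrib]
    refine Finset.sum_congr rfl fun j _ ↦ ?_
    rw [MvPolynomial.pderiv_mul, map_add, add_mul, map_mul, map_mul, mul_right_comm]

theorem derivative_shear_ne_zero [CommRing k] [Nontrivial k] [Finite σ] {N : σ → ℕ}
    (hN : ∀ i, (N i : k) = 1) (hinj : Function.Injective N) {f : MvPolynomial σ k} {i : σ}
    (hi : MvPolynomial.pderiv i f ≠ 0) : derivative (shear N f) ≠ 0 := by
  classical
  cases nonempty_fintype σ
  have hpos (j : σ) : N j ≠ 0 := fun h ↦ one_ne_zero (α := k) (by rw [← hN j, h, Nat.cast_zero])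
  intro h
  have hcoeff := congr((evalAt
    (fun i ↦ (C (MvPolynomial.X i) - X ^ N i : (MvPolynomial σ k)[X])) X $h).coeff (N i - 1))
  simp only [derivative_shear hN, map_sum, map_mul, evalAt_C_sub_X_pow_shear, map_pow, evalAt_X,
    finsetSum_coeff, coeff_C_mul, coeff_X_pow, map_zero, coeff_zero] at hcoeff
  rw [Finset.sum_eq_single i (fun j _ hj ↦ ?_) (by simp), if_pos rfl, mul_one] at hcoeff
  · exact hi hcoeff
  · rw [if_neg, mul_zero]
    have := hinj.ne hj
    have := hpos i
    have := hpos j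
    lia

theorem exists_monic_C_mul_sum {R ι : Type*} [CommRing R] [Nontrivial R] {s : Finset ι}
    (hs : s.Nonempty) (c : ι → R) {M : ι → R[X]} (hM : ∀ d ∈ s, (M d).Monic)
    (hinj : Set.InjOn (fun d ↦ (M d).natDegree) s) :
    ∃ d ∈ s, ∀ u, u * c d = 1 → (C u * ∑ d ∈ s, C (c d) * M d).Monic := by
  classical
  obtain ⟨d, hd, hmax⟩ := s.exists_max_image (fun d ↦ (M d).natDegree) hs
  refine ⟨d, hd, fun u hu ↦ ?_⟩
  rw [← Finset.add_sum_erase _ _ hd, mul_add, ← mul_assoc, ← C_mul, hu, C_1, one_mul]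
  refine (hM d hd).add_of_left ?_
  rw [Finset.mul_sum, degree_eq_natDegree (hM d hd).ne_zero]
  refine (degree_sum_le _ _).trans_lt ((Finset.sup_lt_iff (WithBot.bot_lt_coe _)).2 fun e he ↦ ?_)
  obtain ⟨hne, he⟩ := Finset.mem_erase.1 he
  rw [← mul_assoc, ← C_mul, ← smul_eq_C_mul]
  refine (degree_smul_le _ _).trans_lt ?_
  rw [degree_eq_natDegree (hM e he).ne_zero]
  exact Nat.cast_lt.2 ((hmax e he).lt_of_ne (hinj.ne he hd hne))

theorem exists_monic_C_mul_shear [Field k] [Fintype σ] {N : σ → ℕ} (hN : ∀ i, N i ≠ 0)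
    {f : MvPolynomial σ k} (hf : f ≠ 0)
    (hinj : Set.InjOn (fun d : σ →₀ ℕ ↦ ∑ i, d i * N i) f.support) :
    ∃ u : k, u ≠ 0 ∧ (C (MvPolynomial.C u) * shear N f).Monic := by
  have hmonic (d : σ →₀ ℕ) (i : σ) :
      ((X ^ N i + C (MvPolynomial.X i) : (MvPolynomial σ k)[X]) ^ d i).Monic :=
    (monic_X_pow_add_C _ (hN i)).pow _
  have hdeg (d : σ →₀ ℕ) :
      (∏ i, (X ^ N i + C (MvPolynomial.X i) : (MvPolynomial σ k)[X]) ^ d i).natDegree =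
        ∑ i, d i * N i := by
    rw [natDegree_prod_of_monic _ _ fun i _ ↦ hmonic d i]
    refine Finset.sum_congr rfl fun i _ ↦ ?_
    rw [(monic_X_pow_add_C _ (hN i)).natDegree_pow, natDegree_X_pow_add_C]
  have hsum : shear N f = ∑ d ∈ f.support,
      C (MvPolynomial.C (f.coeff d)) * ∏ i, (X ^ N i + C (MvPolynomial.X i)) ^ d i := by
    rw [shear, MvPolynomial.aeval_def, MvPolynomial.eval₂_eq']
    rfl
  obtain ⟨d, hd, hu⟩ := exists_monic_C_mul_sum (MvPolynomial.support_nonempty.2 hf)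
    (fun d ↦ MvPolynomial.C (f.coeff d)) (fun d _ ↦ monic_prod_of_monic _ _ fun i _ ↦ hmonic d i)
    (by rwa [funext hdeg])
  have hc := MvPolynomial.mem_support_iff.1 hd
  exact ⟨(f.coeff d)⁻¹, inv_ne_zero hc,
    hsum ▸ hu _ (by rw [← MvPolynomial.C_mul, inv_mul_cancel₀ hc, MvPolynomial.C_1])⟩

theorem injOn_sum_mul_pow [Fintype σ] (e : σ ≃ Fin (Fintype.card σ)) (B : ℕ) :
    Set.InjOn (fun d : σ →₀ ℕ ↦ ∑ i, d i * B ^ (e i : ℕ)) {d | ∀ i, d i < B} := by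
  intro d hd d' hd' h
  have hdigits (d : σ →₀ ℕ) (hd : ∀ i, d i < B) : (finFunctionFinEquiv
      fun j ↦ (⟨d (e.symm j), hd _⟩ : Fin B) : ℕ) = ∑ i, d i * B ^ (e i : ℕ) := by
    rw [finFunctionFinEquiv_apply, ← e.sum_comp]
    simp only [Equiv.symm_apply_apply]
  have heq := finFunctionFinEquiv.injective
    (Fin.ext ((hdigits d hd).trans (h.trans (hdigits d' hd').symm)))
  ext i
  simpa using congr_fun heq (e i)

theorem exists_shear_monic_derivative_ne_zero [Field k] [Finite σ] (p : ℕ) [hp : Fact p.Prime]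
    [CharP k p] {f : MvPolynomial σ k} {i : σ} (hi : MvPolynomial.pderiv i f ≠ 0) :
    ∃ (N : σ → ℕ) (u : k), u ≠ 0 ∧ (C (MvPolynomial.C u) * shear N f).Monic ∧
      derivative (C (MvPolynomial.C u) * shear N f) ≠ 0 := by
  cases nonempty_fintype σ
  let e := Fintype.equivFin σ
  let B := 1 + p * (f.totalDegree + 1)
  have hB : 1 < B := Nat.lt_add_of_pos_right (Nat.mul_pos hp.out.pos f.totalDegree.succ_pos)
  have hdeg : f.totalDegree < B := by
    have := Nat.le_mul_of_pos_left (f.totalDegree + 1) hp.out.pos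
    lia
  have hBk : ((B : ℕ) : k) = 1 := by simp [B]
  obtain ⟨u, hu, hmonic⟩ := exists_monic_C_mul_shear (N := fun i ↦ B ^ (e i : ℕ))
    (fun _ ↦ (pow_pos (by lia) _).ne') (f := f) (fun h ↦ hi (by rw [h, map_zero]))
    ((injOn_sum_mul_pow e B).mono fun d hd i ↦ ((MvPolynomial.monomial_le_degreeOf i hd).trans
      (MvPolynomial.degreeOf_le_totalDegree f i)).trans_lt hdeg)
  refine ⟨_, u, hu, hmonic, ?_⟩
  rw [derivative_C_mul]
  exact mul_ne_zero (by simpa using hu) (derivative_shear_ne_zero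
    (fun i ↦ by rw [Function.comp_apply, Nat.cast_pow, hBk, one_pow])
    ((Nat.pow_right_injective hB).comp (Fin.val_injective.comp e.injective)) hi)

theorem fiberDeviation_pow_add_le_zero [Finite σ] {K : Type*} [CommRing K] [Finite K]
    (N : σ → ℕ) :
    fiberDeviation (fun (v : Option σ → K) i ↦ v none ^ N i + v (some i)) ≤ 0 := by
  cases nonempty_fintype σ
  refine (fiberDeviation_le_of_le_card_fiber (c := Nat.card K) _ fun y ↦ ?_).trans_eq ?_
  · refine Nat.card_le_card_of_injective (fun x ↦ ⟨fun o ↦ o.elim x fun i ↦ y i - x ^ N i, ?_⟩)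
      fun x x' h ↦ congr_fun (Subtype.ext_iff.1 h) none
    exact funext fun i ↦ add_sub_cancel _ _
  · have hK : (Nat.card K : ℝ) ≠ 0 := mod_cast Nat.card_pos.ne'
    simp only [Nat.card_fun, Nat.card_eq_fintype_card (α := Option σ), Fintype.card_option,
      Nat.card_eq_fintype_card (α := σ), Nat.cast_pow, ← pow_succ']
    rw [div_self (pow_ne_zero _ hK), sub_self, mul_zero]

end Shear

section PolynomialMap

variable {σ k : Type*} [Field k]

theorem card_collisions_evalAt {A : Type*} [CommRing A] [Algebra k A]
    (G : (MvPolynomial σ k)[X]) :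
    Nat.card {v : (Option σ → A) × (Option σ → A) //
      evalAt (v.1 ∘ some) (v.1 none) G = evalAt (v.2 ∘ some) (v.2 none) G} =
    Nat.card {z : (Option σ ⊕ σ → A) × A // evalAt z.1 z.2 (difference G) = 0} := by
  refine Nat.card_congr (Equiv.subtypeEquiv
    { toFun v := (Sum.elim v.1 (v.2 ∘ some), v.2 none)
      invFun z := (z.1 ∘ Sum.inl, fun o ↦ o.elim z.2 (z.1 ∘ Sum.inr))
      left_inv v := Prod.ext rfl (funext fun o ↦ by cases o <;> rfl)
      right_inv z := Prod.ext (Sum.elim_comp_inl_inr z.1) rfl } fun v ↦ ?_)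
  change _ ↔ evalAt (Sum.elim v.1 (v.2 ∘ some)) (v.2 none) (difference G) = 0
  rw [evalAt_difference, Sum.elim_comp_inr, sub_eq_zero, eq_comm]
  rfl

theorem le_mul_one_add_of_sub_one_mul_le {N M C P B : ℝ} (hM : 0 ≤ M) (hC : 0 ≤ C) (hP : 0 < P)
    (hB : 1 ≤ B) (hPB : 2 ≤ P * B) (h : (P * B - 1) * N ≤ M * (P * B + C * B)) :
    N ≤ M * (1 + 2 * (1 + C) / P) := by
  have hden : 0 < P * B - 1 := by linarith
  have hkey : P * B + C * B ≤ (P * B - 1) * (1 + 2 * (1 + C) / P) := by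
    calc P * B + C * B ≤ P * B - 1 + (1 + C) * B := by linarith
      _ = P * B - 1 + P * B / 2 * (2 * (1 + C) / P) := by field_simp
      _ ≤ P * B - 1 + (P * B - 1) * (2 * (1 + C) / P) := by
        gcongr
        linarith
      _ = (P * B - 1) * (1 + 2 * (1 + C) / P) := by ring
  refine le_of_mul_le_mul_left (h.trans ?_) hden
  rw [mul_left_comm]
  gcongr

theorem exists_fiberDeviation_evalAt_le [Finite σ] (p : ℕ) [hp : Fact p.Prime] [CharP k p]
    {G : (MvPolynomial σ k)[X]} (hG : (difference G).Monic) (hirr : Irreducible (difference G))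
    (hder : restrictDiagonal (derivative (difference G)) ≠ 0) :
    ∃ C : ℕ, ∀ (K : Type*) [Field K] [Finite K] [Algebra k K] (a b : ℕ),
      Nat.card K = p ^ a * p ^ b → p ^ a ≤ p ^ b → C ≤ p ^ a →
      fiberDeviation (fun v : Option σ → K ↦ evalAt (v ∘ some) (v none) G) ≤
        √(2 * (1 + C) / p ^ a) := by
  cases nonempty_fintype σ
  obtain ⟨C, hC⟩ := exists_card_evalAt_eq_zero_le hG hirr (restrictDiagonal_difference G) hder p
  refine ⟨C, fun K _ _ _ a b hcard hab hCa ↦ fiberDeviation_le_sqrt _ ?_⟩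
  cases nonempty_fintype K
  rw [Nat.card_eq_fintype_card] at hcard
  have hbound := Nat.cast_le (α := ℝ).2 (hC K a b hcard hab hCa)
  have hq : (Fintype.card K : ℝ) = p ^ a * p ^ b := mod_cast hcard
  rw [← card_collisions_evalAt, Nat.cast_mul, Nat.cast_sub Fintype.card_pos, Nat.cast_mul,
    Nat.cast_pow, Nat.cast_add, Nat.cast_mul, Nat.cast_pow, Nat.cast_one, hq] at hbound
  have hp1 : (1 : ℝ) ≤ p := mod_cast hp.out.one_lt.le
  have hN := le_mul_one_add_of_sub_one_mul_le (by positivity) C.cast_nonneg (by positivity)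
    (one_le_pow₀ hp1) (hq ▸ mod_cast Fintype.one_lt_card (α := K)) hbound
  refine (mul_le_mul_of_nonneg_right hN (Nat.card K).cast_nonneg).trans_eq ?_
  simp only [Nat.card_fun, Nat.card_eq_fintype_card (α := K), Fintype.card_sum,
    Nat.card_eq_fintype_card (α := Option σ), Fintype.card_option, Nat.cast_pow, hq]
  ring

theorem factorsThrough_of_difference_dvd {A : Type*} [CommRing A] [Algebra k A]
    {G Q : (MvPolynomial σ k)[X]} (h : difference G ∣ difference Q) :
    (fun v : Option σ → A ↦ evalAt (v ∘ some) (v none) Q).FactorsThrough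
      fun v ↦ evalAt (v ∘ some) (v none) G := by
  intro v v' hv
  have hdvd := _root_.map_dvd (evalAt (Sum.elim v' (v ∘ some)) (v none)) h
  simp only [evalAt_difference, Sum.elim_comp_inr, Sum.elim_inl] at hdvd
  exact sub_eq_zero.1 (zero_dvd_iff.1 (sub_eq_zero.2 hv ▸ hdvd))

theorem exists_fiberDeviation_aeval_le [Finite σ] (p : ℕ) [Fact p.Prime] [CharP k p]
    [PerfectRing k p] {f : MvPolynomial σ k} (hf : f.totalDegree ≠ 0) :
    ∃ C : ℕ, ∀ (K : Type*) [Field K] [Finite K] [Algebra k K] (a b : ℕ),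
      Nat.card K = p ^ a * p ^ b → p ^ a ≤ p ^ b → C ≤ p ^ a →
      fiberDeviation (fun y : σ → K ↦ MvPolynomial.aeval y f) ≤ √(2 * (1 + C) / p ^ a) +
        2 * (Nat.card K - Nat.card (Set.range fun y : σ → K ↦ MvPolynomial.aeval y f)) /
          Nat.card K := by
  obtain ⟨g, j, rfl, i, hi⟩ := exists_pow_eq_pderiv_ne_zero p hf
  obtain ⟨N, u, hu, hmonic, hder⟩ := exists_shear_monic_derivative_ne_zero p hi
  obtain ⟨G, hG, hirr, hdvd, hGder⟩ := exists_irreducible_difference_dvd_difference hmonic hder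
  obtain ⟨C, hC⟩ := exists_fiberDeviation_evalAt_le p hG hirr hGder
  refine ⟨C, fun K _ _ _ a b hcard hab hCa ↦ ?_⟩
  let F : (σ → K) → K := fun y ↦ MvPolynomial.aeval y (g ^ p ^ j)
  let ρ : (Option σ → K) → σ → K := fun v i ↦ v none ^ N i + v (some i)
  have hfactors : (F ∘ ρ).FactorsThrough fun v : Option σ → K ↦ evalAt (v ∘ some) (v none) G := by
    intro v v' hv
    have huK : algebraMap k K u ≠ 0 := (_root_.map_ne_zero _).2 hu
    have h := factorsThrough_of_difference_dvd hdvd hv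
    simp only [map_mul, evalAt_C, MvPolynomial.aeval_C, evalAt_shear] at h
    simp only [F, ρ, Function.comp_apply, map_pow]
    exact congrArg (· ^ p ^ j) (mul_left_cancel₀ huK h)
  have hρ : ρ.Surjective := fun y ↦
    ⟨fun o ↦ o.elim 0 fun i ↦ y i - 0 ^ N i, funext fun _ ↦ add_sub_cancel _ _⟩
  calc fiberDeviation F ≤ fiberDeviation ρ + fiberDeviation (F ∘ ρ) :=
        fiberDeviation_le_comp_add ρ F
    _ ≤ fiberDeviation (F ∘ ρ) := add_le_of_nonpos_left (fiberDeviation_pow_add_le_zero N)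
    _ ≤ _ := (fiberDeviation_le_of_factorsThrough hfactors).trans
        (hρ.range_comp F ▸ add_le_add_left (hC K a b hcard hab hCa) _)

theorem tendsto_fiberDeviation_aeval [Finite σ] {p : ℕ} [hp : Fact p.Prime]
    {f : MvPolynomial σ (ZMod p)}
    (h : ∀ᶠ n in Filter.atTop, Nat.card (GaloisField p n) ≤
      Nat.card (Set.range fun y : σ → GaloisField p n ↦ MvPolynomial.aeval y f) + 2) :
    Filter.Tendsto (fun n ↦ fiberDeviation fun y : σ → GaloisField p n ↦ MvPolynomial.aeval y f)
      Filter.atTop (nhds 0) := by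
  have hf : f.totalDegree ≠ 0 := fun hf ↦ by
    obtain ⟨n, hn, hn2⟩ := (h.and (Filter.eventually_ge_atTop 2)).exists
    rw [MvPolynomial.totalDegree_eq_zero_iff_eq_C.1 hf, GaloisField.card p n (by lia)] at hn
    simp only [MvPolynomial.aeval_C, Set.range_const, Nat.card_unique] at hn
    have := hp.out.two_le
    nlinarith [Nat.pow_le_pow_right hp.out.pos hn2]
  obtain ⟨C, hC⟩ := exists_fiberDeviation_aeval_le p hf
  have hA : Filter.Tendsto (fun n : ℕ ↦ (p : ℝ) ^ (n / 2)) Filter.atTop Filter.atTop :=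
    (tendsto_pow_atTop_atTop_of_one_lt (mod_cast hp.out.one_lt)).comp
      (Nat.tendsto_div_const_atTop two_ne_zero)
  have hlim : Filter.Tendsto (fun n : ℕ ↦ √(2 * (1 + C) / (p : ℝ) ^ (n / 2)) +
      4 / (p : ℝ) ^ (n / 2)) Filter.atTop (nhds 0) := by
    simpa using (hA.const_div_atTop (2 * (1 + C : ℝ))).sqrt.add (hA.const_div_atTop 4)
  refine squeeze_zero' (.of_forall fun n ↦ finsum_nonneg fun _ ↦ abs_nonneg _) ?_ hlim
  filter_upwards [h, Filter.eventually_ge_atTop 2, hA.eventually_ge_atTop C] with n hn hn2 hCn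
  have hcard : Nat.card (GaloisField p n) = p ^ (n / 2) * p ^ (n - n / 2) := by
    rw [GaloisField.card p n (by lia), ← pow_add, Nat.add_sub_cancel' (Nat.div_le_self n 2)]
  have hle : (p : ℝ) ^ (n / 2) ≤ Nat.card (GaloisField p n) :=
    mod_cast hcard ▸ Nat.le_mul_of_pos_right _ (pow_pos hp.out.pos _)
  refine (hC _ _ _ hcard (Nat.pow_le_pow_right hp.out.pos (by lia)) (mod_cast hCn)).trans ?_
  have hn' : (Nat.card (GaloisField p n) : ℝ) - Nat.card (Set.range
      fun y : σ → GaloisField p n ↦ MvPolynomial.aeval y f) ≤ 2 :=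
    sub_le_iff_le_add'.2 (mod_cast hn)
  have hpos : (0 : ℝ) < p ^ (n / 2) := pow_pos (mod_cast hp.out.pos) _
  exact add_le_add_right (div_le_div₀ (by norm_num) (by linarith) hpos hle) _

end PolynomialMap

/-! ### Traces of words on `SL(2)` -/

section UnipotentProduct

/-- The product of four elementary matrices in `SL(2,R)`, alternately upper and lower
unitriangular; as a polynomial map from `R⁴` it parametrizes the group when `R` is a field. -/
def unipotentProduct {R : Type} [CommRing R] (v : Fin 4 → R) : SL2 R :=
  SpecialLinearGroup.transvection zero_ne_one (v 0) *
    SpecialLinearGroup.transvection one_ne_zero (v 1) *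
    SpecialLinearGroup.transvection zero_ne_one (v 2) *
    SpecialLinearGroup.transvection one_ne_zero (v 3)

theorem coe_unipotentProduct {R : Type} [CommRing R] (v : Fin 4 → R) :
    (unipotentProduct v : Matrix (Fin 2) (Fin 2) R) =
      !![1 + v 0 * v 1 + ((1 + v 0 * v 1) * v 2 + v 0) * v 3, (1 + v 0 * v 1) * v 2 + v 0;
        v 1 + (v 1 * v 2 + 1) * v 3, v 1 * v 2 + 1] := by
  have hupper (a : R) : (SpecialLinearGroup.transvection (zero_ne_one (α := Fin 2)) a :
      Matrix (Fin 2) (Fin 2) R) = !![1, a; 0, 1] := by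
    ext i j; fin_cases i <;> fin_cases j <;> simp [SpecialLinearGroup.transvection_coe]
  have hlower (a : R) : (SpecialLinearGroup.transvection (one_ne_zero (α := Fin 2)) a :
      Matrix (Fin 2) (Fin 2) R) = !![1, 0; a, 1] := by
    ext i j; fin_cases i <;> fin_cases j <;> simp [SpecialLinearGroup.transvection_coe]
  simp [unipotentProduct, hupper, hlower]

theorem map_unipotentProduct {R S : Type} [CommRing R] [CommRing S] (φ : R →+* S)
    (v : Fin 4 → R) :
    SpecialLinearGroup.map φ (unipotentProduct v) = unipotentProduct (φ ∘ v) := by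
  refine Subtype.ext ?_
  rw [SpecialLinearGroup.map_apply_coe, coe_unipotentProduct, coe_unipotentProduct]
  ext i j
  fin_cases i <;> fin_cases j <;> simp

theorem unipotentProduct_eq {K : Type} [Field K] (g : SL2 K) {e : K} (he : g 1 0 ≠ e * g 1 1) :
    unipotentProduct ![(g 0 0 - e * g 0 1 - 1) / (g 1 0 - e * g 1 1), g 1 0 - e * g 1 1,
      (g 1 1 - 1) / (g 1 0 - e * g 1 1), e] = g := by
  have hdet := g.2
  have he := sub_ne_zero.2 he
  rw [det_fin_two] at hdet
  refine Subtype.ext ?_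
  rw [coe_unipotentProduct]
  ext i j
  fin_cases i <;> fin_cases j <;> simp <;> field_simp
  · linear_combination e * hdet
  · linear_combination hdet
  · ring
  · ring

theorem card_sub_one_le_card_ne_mul {K : Type} [Field K] [Finite K] (g : SL2 K) :
    Nat.card K - 1 ≤ Nat.card {e : K // g 1 0 ≠ e * g 1 1} := by
  classical
  have hsub : Subsingleton {e : K // ¬ g 1 0 ≠ e * g 1 1} := by
    refine ⟨fun e e' ↦ Subtype.ext ?_⟩
    have he := not_not.1 e.2
    refine mul_right_cancel₀ (fun h ↦ g.row_ne_zero 1 (funext fun i ↦ ?_))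
      (he.symm.trans (not_not.1 e'.2))
    fin_cases i
    · exact he.trans (mul_eq_zero_of_right _ h)
    · exact h
  have hcard := Nat.card_congr (Equiv.sumCompl fun e : K ↦ g 1 0 ≠ e * g 1 1)
  have := Finite.card_le_one_iff_subsingleton.2 hsub
  rw [Nat.card_sum] at hcard
  lia

theorem card_sub_one_le_card_fiber_unipotentProduct {K : Type} [Field K] [Finite K] (g : SL2 K) :
    Nat.card K - 1 ≤ Nat.card {v // unipotentProduct v = g} :=
  (card_sub_one_le_card_ne_mul g).trans <| Nat.card_le_card_of_injective
    (fun e ↦ ⟨_, unipotentProduct_eq g e.2⟩)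
    fun _ _ h ↦ Subtype.ext (congr_fun (Subtype.ext_iff.1 h) 3)

/-- The polynomial parametrization of `SL(2,R) × SL(2,R)` by two unipotent products. -/
def unipotentProductPair {R : Type} [CommRing R] (v : Fin 4 ⊕ Fin 4 → R) : SL2 R × SL2 R :=
  (unipotentProduct (v ∘ Sum.inl), unipotentProduct (v ∘ Sum.inr))

theorem sq_card_sub_one_le_card_fiber_unipotentProductPair {K : Type} [Field K] [Finite K]
    (x : SL2 K × SL2 K) :
    (Nat.card K - 1) ^ 2 ≤ Nat.card {v // unipotentProductPair v = x} := by
  let e : {v // unipotentProductPair v = x} ≃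
      {v // unipotentProduct v = x.1} × {v // unipotentProduct v = x.2} :=
    ((Equiv.sumArrowEquivProdArrow _ _ _).subtypeEquiv fun v ↦ Prod.ext_iff).trans
      Equiv.subtypeProdEquivProd
  rw [Nat.card_congr e, Nat.card_prod, sq]
  exact Nat.mul_le_mul (card_sub_one_le_card_fiber_unipotentProduct x.1)
    (card_sub_one_le_card_fiber_unipotentProduct x.2)

theorem unipotentProductPair_surjective {K : Type} [Field K] [Finite K] :
    (unipotentProductPair (R := K)).Surjective := fun x ↦ by
  have hK := Finite.one_lt_card (α := K)
  have hpos := (pow_pos (Nat.sub_pos_of_lt hK) 2).trans_le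
    (sq_card_sub_one_le_card_fiber_unipotentProductPair x)
  obtain ⟨v, hv⟩ := (Nat.card_pos_iff.1 hpos).1
  exact ⟨v, hv⟩

end UnipotentProduct

section Trace

theorem card_mul_sub_one_le_card_fiber_trace {K : Type} [Field K] [Finite K] (z : K) :
    Nat.card K * (Nat.card K - 1) ≤ Nat.card {g : SL2 K // trace g.1 = z} := by
  rw [← Nat.card_units, ← Nat.card_prod]
  refine Nat.card_le_card_of_injective (fun s ↦
    ⟨⟨!![s.1, s.2; (↑s.2⁻¹ : K) * (s.1 * (z - s.1) - 1), z - s.1], ?_⟩, ?_⟩) fun s t h ↦ ?_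
  · rw [det_fin_two_of, s.2.mul_inv_cancel_left]
    ring
  · simp [trace_fin_two]
  · have hM := congrArg Subtype.val (Subtype.ext_iff.1 h)
    exact Prod.ext (congr_fun₂ hM 0 0) (Units.ext (congr_fun₂ hM 0 1))

theorem card_mul_le_card_of_le_card_fiber {X Y : Type*} [Finite X] [Finite Y] (f : X → Y) {c : ℕ}
    (h : ∀ y, c ≤ Nat.card {x // f x = y}) : Nat.card Y * c ≤ Nat.card X := by
  cases nonempty_fintype Y
  rw [← Nat.card_congr (Equiv.sigmaFiberEquiv f), Nat.card_sigma, Nat.card_eq_fintype_card,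
    ← Finset.card_univ, ← smul_eq_mul]
  exact Finset.card_nsmul_le_sum _ _ _ fun y _ ↦ h y

theorem one_sub_div_le_pow {q : ℝ} (hq : 1 ≤ q) (n : ℕ) : 1 - n / q ≤ ((q - 1) / q) ^ n := by
  have hinv : q⁻¹ ≤ 1 := inv_le_one_of_one_le₀ hq
  have hdiv : (q - 1) / q = 1 + -q⁻¹ := by
    field_simp
    ring
  rw [hdiv, sub_eq_add_neg, div_eq_mul_inv, ← mul_neg]
  exact one_add_mul_le_pow (by linarith) n

theorem fiberDeviation_trace_le {K : Type} [Field K] [Finite K] :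
    fiberDeviation (fun g : SL2 K ↦ trace g.1) ≤ 4 / Nat.card K := by
  have hq : (1 : ℝ) < Nat.card K := mod_cast Finite.one_lt_card
  have hle := card_mul_le_card_of_le_card_fiber _
    (card_sub_one_le_card_fiber_unipotentProduct (K := K))
  rw [Nat.card_fun, Nat.card_fin] at hle
  have hle : (Nat.card (SL2 K) : ℝ) * (Nat.card K - 1) ≤ Nat.card K ^ 4 := by
    simpa only [Nat.cast_mul, Nat.cast_pow, Nat.cast_pred Nat.card_pos] using
      Nat.cast_le (α := ℝ).2 hle
  have hG : (0 : ℝ) < Nat.card (SL2 K) := mod_cast Nat.card_pos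
  refine (fiberDeviation_le_of_le_card_fiber _ card_mul_sub_one_le_card_fiber_trace).trans ?_
  rw [Nat.cast_mul, Nat.cast_pred Nat.card_pos]
  generalize (Nat.card K : ℝ) = q at *
  have hbound : ((q - 1) / q) ^ 2 ≤ q * (q - 1) * q / Nat.card (SL2 K) := by
    rw [le_div_iff₀ hG]
    calc ((q - 1) / q) ^ 2 * Nat.card (SL2 K)
        = (q - 1) / q ^ 2 * (Nat.card (SL2 K) * (q - 1)) := by ring
      _ ≤ (q - 1) / q ^ 2 * q ^ 4 := by
        have := sub_pos.2 hq
        gcongr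
      _ = q * (q - 1) * q := by field_simp
  have hpow := one_sub_div_le_pow hq.le 2
  push_cast at hpow
  linear_combination 2 * hbound + 2 * hpow

theorem fiberDeviation_unipotentProductPair_le {K : Type} [Field K] [Finite K] :
    fiberDeviation (unipotentProductPair (R := K)) ≤ 8 / Nat.card K := by
  have hq : (1 : ℝ) < Nat.card K := mod_cast Finite.one_lt_card
  have hle := card_mul_le_card_of_le_card_fiber _
    (card_mul_sub_one_le_card_fiber_trace (K := K))
  have hle : (Nat.card K : ℝ) * (Nat.card K * (Nat.card K - 1)) ≤ Nat.card (SL2 K) := by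
    simpa only [Nat.cast_mul, Nat.cast_pred Nat.card_pos] using Nat.cast_le (α := ℝ).2 hle
  refine (fiberDeviation_le_of_le_card_fiber _
    sq_card_sub_one_le_card_fiber_unipotentProductPair).trans ?_
  rw [Nat.card_fun, Nat.card_sum, Nat.card_fin, Nat.card_prod, Nat.cast_pow,
    Nat.cast_pred Nat.card_pos, Nat.cast_mul, Nat.cast_pow]
  generalize (Nat.card K : ℝ) = q at *
  have hbound : ((q - 1) / q) ^ 4 ≤
      (q - 1) ^ 2 * (Nat.card (SL2 K) * Nat.card (SL2 K)) / q ^ (4 + 4) := by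
    calc ((q - 1) / q) ^ 4
        = (q - 1) ^ 2 * ((q * (q * (q - 1))) * (q * (q * (q - 1)))) / q ^ (4 + 4) := by
          field_simp
          ring
      _ ≤ _ := by
        have := sub_pos.2 hq
        gcongr
  have hpow := one_sub_div_le_pow hq.le 4
  push_cast at hpow
  linear_combination 2 * hbound + 2 * hpow

end Trace

section WordMap

theorem wordEval_map {G H : Type*} [Group G] [Group H] (φ : G →* H) (w : FreeGroup (Fin 2))
    (x y : G) : wordEval w (φ x) (φ y) = φ (wordEval w x y) := by
  refine DFunLike.congr_fun (f := FreeGroup.lift ![φ x, φ y])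
    (g := φ.comp (FreeGroup.lift ![x, y])) (FreeGroup.ext_hom _ _ fun i ↦ ?_) w
  fin_cases i <;> simp

theorem fiberDensity_wordMap_mulEquiv {K : Type} [CommRing K] (w : FreeGroup (Fin 2))
    (φ : SL2 K ≃* SL2 K) (g : SL2 K) :
    fiberDensity (wordMap w K) (φ g) = fiberDensity (wordMap w K) g := by
  refine congrArg (fun c : ℕ ↦ (c : ℝ) / _) (Nat.card_congr
    (Equiv.subtypeEquiv (φ.toEquiv.prodCongr φ.toEquiv) fun x ↦ ?_)).symm
  have hφ : wordMap w K (φ x.1, φ x.2) = φ (wordMap w K x) :=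
    wordEval_map φ.toMonoidHom w x.1 x.2
  exact φ.injective.eq_iff.symm.trans (Eq.congr_left hφ.symm)

/-- Conjugation by a matrix of `GL(n,R)`, as an automorphism of `SL(n,R)`. -/
def conjGL {n R : Type*} [Fintype n] [DecidableEq n] [CommRing R] (P : GL n R) :
    SpecialLinearGroup n R ≃* SpecialLinearGroup n R where
  toFun g := ⟨P.val * g.val * P⁻¹.val, by rw [det_units_conj, g.2]⟩
  invFun g := ⟨P⁻¹.val * g.val * P.val, by rw [det_units_conj', g.2]⟩
  left_inv g := Subtype.ext (by simp only [mul_assoc, Units.inv_mul, Units.inv_mul_cancel_left,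
    mul_one])
  right_inv g := Subtype.ext (by simp only [mul_assoc, Units.mul_inv, Units.mul_inv_cancel_left,
    mul_one])
  map_mul' g h := Subtype.ext <| by
    change P.val * (g.val * h.val) * P⁻¹.val =
      P.val * g.val * P⁻¹.val * (P.val * h.val * P⁻¹.val)
    simp only [mul_assoc, Units.inv_mul_cancel_left]

/-- The companion matrix of `X² - zX + 1`. -/
def companionSL2 {R : Type} [CommRing R] (z : R) : SL2 R :=
  ⟨!![0, -1; 1, z], by simp [det_fin_two_of]⟩

theorem trace_companionSL2 {R : Type} [CommRing R] (z : R) :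
    trace (companionSL2 z).1 = z := by
  simp [companionSL2, trace_fin_two]

-- A vector `v` with `v, A v` linearly independent is found among `e₁`, `e₂` and `e₁ + e₂`.
theorem exists_mul_eq_mul_companion {K : Type*} [Field K] {A : Matrix (Fin 2) (Fin 2) K}
    (hA : A.discr ≠ 0) :
    ∃ P : GL (Fin 2) K, A * P = P * !![0, -A.det; 1, A.trace] := by
  have hcyc (x y : K) (h : x * (A 1 0 * x + A 1 1 * y) - (A 0 0 * x + A 0 1 * y) * y ≠ 0) :
      ∃ P : GL (Fin 2) K, A * P = P * !![0, -A.det; 1, A.trace] := by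
    refine ⟨.mkOfDetNeZero !![x, A 0 0 * x + A 0 1 * y; y, A 1 0 * x + A 1 1 * y]
      (by rwa [det_fin_two_of]), ?_⟩
    rw [det_fin_two A, trace_fin_two A]
    ext i j
    fin_cases i <;> fin_cases j <;>
      simp [GeneralLinearGroup.mkOfDetNeZero, Matrix.mul_apply] <;> ring
  by_contra hP
  have h₁ : A 1 0 = 0 := by simpa using mt (hcyc 1 0) hP
  have h₂ : A 0 1 = 0 := by simpa using mt (hcyc 0 1) hP
  have h₃ : A 1 1 = A 0 0 := by simpa [h₁, h₂, sub_eq_zero] using mt (hcyc 1 1) hP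
  refine hA ?_
  rw [discr_fin_two, det_fin_two, trace_fin_two, h₁, h₂, h₃]
  ring

theorem exists_conjGL_companionSL2_eq {K : Type} [Field K] {g : SL2 K}
    (h : trace g.1 ≠ 2) (h' : trace g.1 ≠ -2) :
    ∃ P : GL (Fin 2) K, conjGL P (companionSL2 (trace g.1)) = g := by
  have hdiscr : g.1.discr ≠ 0 := by
    rw [discr_fin_two, g.2]
    convert mul_ne_zero (sub_ne_zero.2 h) (sub_ne_zero.2 h') using 1
    ring
  obtain ⟨P, hP⟩ := exists_mul_eq_mul_companion hdiscr
  refine ⟨P, Subtype.ext ?_⟩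
  rw [g.2] at hP
  change (P : Matrix (Fin 2) (Fin 2) K) * !![0, -1; 1, trace g.1] * _ = _
  rw [← hP, mul_assoc]
  simp

theorem fiberDensity_wordMap_eq_of_trace_eq {K : Type} [Field K] (w : FreeGroup (Fin 2))
    {g h : SL2 K} (h2 : trace g.1 ≠ 2) (h2' : trace g.1 ≠ -2) (hgh : trace g.1 = trace h.1) :
    fiberDensity (wordMap w K) g = fiberDensity (wordMap w K) h := by
  obtain ⟨P, hP⟩ := exists_conjGL_companionSL2_eq h2 h2'
  obtain ⟨Q, hQ⟩ := exists_conjGL_companionSL2_eq (hgh ▸ h2) (hgh ▸ h2')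
  rw [← hP, ← hQ, fiberDensity_wordMap_mulEquiv, fiberDensity_wordMap_mulEquiv, hgh]

/-- The trace of a word in two matrices of `SL(2)`, as a polynomial in the coordinates of the
parametrization `unipotentProductPair`. -/
noncomputable def wordTrace (w : FreeGroup (Fin 2)) (k : Type) [CommRing k] :
    MvPolynomial (Fin 4 ⊕ Fin 4) k :=
  trace (wordMap w (MvPolynomial (Fin 4 ⊕ Fin 4) k) (unipotentProductPair MvPolynomial.X)).1

theorem aeval_wordTrace {k K : Type} [CommRing k] [CommRing K] [Algebra k K]
    (w : FreeGroup (Fin 2)) (v : Fin 4 ⊕ Fin 4 → K) :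
    MvPolynomial.aeval v (wordTrace w k) = trace (wordMap w K (unipotentProductPair v)).1 := by
  let φ : MvPolynomial (Fin 4 ⊕ Fin 4) k →+* K := (MvPolynomial.aeval v).toRingHom
  have hX (ι : Fin 4 → Fin 4 ⊕ Fin 4) :
      unipotentProduct (v ∘ ι) = SpecialLinearGroup.map φ (unipotentProduct (.X ∘ ι)) := by
    rw [map_unipotentProduct]
    exact congrArg _ (funext fun i ↦ (MvPolynomial.aeval_X v _).symm)
  rw [wordMap, unipotentProductPair, hX, hX, wordEval_map]
  exact AddMonoidHom.map_trace φ.toAddMonoidHom _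

theorem card_le_card_range_aeval_wordTrace_add_two {k K : Type} [CommRing k] [Field K] [Finite K]
    [Algebra k K] {w : FreeGroup (Fin 2)}
    (h : ∀ g : SL2 K, trace g.1 ≠ 2 ∧ trace g.1 ≠ -2 → g ∈ Set.range (wordMap w K)) :
    Nat.card K ≤ Nat.card (Set.range fun v : Fin 4 ⊕ Fin 4 → K ↦
      MvPolynomial.aeval v (wordTrace w k)) + 2 := by
  set S := Set.range fun v : Fin 4 ⊕ Fin 4 → K ↦ MvPolynomial.aeval v (wordTrace w k)
  have hcompl : Sᶜ ⊆ {2, -2} := fun z hz ↦ by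
    by_contra hne
    have hz2 : z ≠ 2 ∧ z ≠ -2 := not_or.1 hne
    rw [← trace_companionSL2 z] at hz2
    obtain ⟨x, hx⟩ := h _ hz2
    obtain ⟨v, rfl⟩ := unipotentProductPair_surjective x
    exact hz ⟨v, by simp only [aeval_wordTrace, hx, trace_companionSL2]⟩
  rw [Nat.card_coe_set_eq, ← Set.ncard_add_ncard_compl S]
  refine add_le_add_right ((Set.ncard_le_ncard hcompl).trans ?_) _
  exact (Set.ncard_insert_le _ _).trans_eq (by rw [Set.ncard_singleton])

theorem isEquidistributed_wordMap {k K : Type} [CommRing k] [Field K] [Finite K] [Algebra k K]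
    {w : FreeGroup (Fin 2)} {δ : ℝ} (hδ : 0 < δ)
    (h : 6 / Nat.card K + (12 / Nat.card K + fiberDeviation fun v : Fin 4 ⊕ Fin 4 → K ↦
      MvPolynomial.aeval v (wordTrace w k)) / δ < δ) :
    IsEquidistributed (wordMap w K) δ := by
  classical
  refine isEquidistributed_of_comp (τ := fun g : SL2 K ↦ trace g.1) {2, -2}
    (fun g h hg hgh ↦ ?_) hδ (lt_of_le_of_lt ?_ h)
  · rw [Finset.mem_insert, Finset.mem_singleton, not_or] at hg
    exact fiberDensity_wordMap_eq_of_trace_eq w hg.1 hg.2 hgh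
  · have hE : (({2, -2} : Finset K).card : ℝ) ≤ 2 := mod_cast Finset.card_le_two
    have hcomp := fiberDeviation_le_comp_add (unipotentProductPair (R := K))
      ((fun g : SL2 K ↦ trace g.1) ∘ wordMap w K)
    have htr := fiberDeviation_trace_le (K := K)
    have hpair := fiberDeviation_unipotentProductPair_le (K := K)
    simp only [aeval_wordTrace]
    refine add_le_add ?_ (div_le_div_of_nonneg_right ?_ hδ.le)
    · calc _ ≤ 2 / (Nat.card K : ℝ) + 4 / Nat.card K := by gcongr
        _ = 6 / Nat.card K := by ring
    · calc _ ≤ 8 / (Nat.card K : ℝ) + _ + 4 / Nat.card K := by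
            gcongr
            exact hcomp.trans (add_le_add_left hpair _)
        _ = _ := by
            simp only [Function.comp_def]
            ring

theorem eventually_isEquidistributed_wordMap {p : ℕ} [Fact p.Prime] {w : FreeGroup (Fin 2)}
    (h : ∀ᶠ n in Filter.atTop, ∀ g : SL2 (GaloisField p n),
      trace g.1 ≠ 2 ∧ trace g.1 ≠ -2 → g ∈ Set.range (wordMap w (GaloisField p n)))
    {δ : ℝ} (hδ : 0 < δ) :
    ∀ᶠ n in Filter.atTop, IsEquidistributed (wordMap w (GaloisField p n)) δ := by
  have hdev := tendsto_fiberDeviation_aeval (f := wordTrace w (ZMod p))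
    (h.mono fun n hn ↦ card_le_card_range_aeval_wordTrace_add_two hn)
  have hq : Filter.Tendsto (fun n ↦ (Nat.card (GaloisField p n) : ℝ)) Filter.atTop
      Filter.atTop := by
    have hp : (1 : ℝ) < p := mod_cast (Fact.out : p.Prime).one_lt
    refine (tendsto_pow_atTop_atTop_of_one_lt hp).congr' ?_
    filter_upwards [Filter.eventually_ne_atTop 0] with n hn
    rw [GaloisField.card p n hn, Nat.cast_pow]
  have hbound := (hq.const_div_atTop 6).add (((hq.const_div_atTop 12).add hdev).div_const δ)
  rw [add_zero, zero_div, add_zero] at hbound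
  exact (hbound.eventually_lt_const hδ).mono fun n ↦ isEquidistributed_wordMap hδ

end WordMap

/-! ### One sequence for all primes -/

section Diagonal

open Filter Topology

theorem exists_tendsto_zero_eventually {E : ℕ → ℝ → Prop} (h : ∀ δ > 0, ∀ᶠ n in atTop, E n δ) :
    ∃ ε : ℕ → ℝ, Tendsto ε atTop (𝓝 0) ∧ ∀ᶠ n in atTop, E n (ε n) := by
  have hk (k : ℕ) : ∃ a, ∀ n ≥ a, E n (1 / (k + 1)) :=
    eventually_atTop.1 (h _ Nat.one_div_pos_of_nat)
  choose a ha using hk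
  refine ⟨fun n ↦ 1 / ((Nat.findGreatest (a · ≤ n) n : ℕ) + 1),
    tendsto_one_div_add_atTop_nhds_zero_nat.comp (tendsto_atTop.2 fun k ↦ ?_), ?_⟩
  · filter_upwards [eventually_ge_atTop k, eventually_ge_atTop (a k)] with n hn han
    exact Nat.le_findGreatest hn han
  · filter_upwards [eventually_ge_atTop (a 0)] with n hn
    exact ha _ _ (Nat.findGreatest_spec (P := (a · ≤ n)) n.zero_le hn)

theorem exists_tendsto_cofinite_zero {ι : Type*} [Countable ι] {e : ι → ℕ → ℝ}
    (he : ∀ i, Tendsto (e i) atTop (𝓝 0)) :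
    ∃ ε : ι × ℕ → ℝ, Tendsto ε cofinite (𝓝 0) ∧ ∀ i, ∀ᶠ n in atTop, ε (i, n) = e i n := by
  obtain ⟨c, hc⟩ := exists_injective_nat ι
  have hT (i : ι) : ∃ T, ∀ n ≥ T, |e i n| < 1 / (c i + 1) :=
    eventually_atTop.1 ((he i).abs.eventually_lt_const (abs_zero.trans_lt Nat.one_div_pos_of_nat))
  choose T hT using hT
  refine ⟨fun x ↦ if T x.1 ≤ x.2 then e x.1 x.2 else 0, Metric.tendsto_nhds.2 fun η hη ↦ ?_,
    fun i ↦ (eventually_ge_atTop (T i)).mono fun n hn ↦ if_pos hn⟩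
  have hc0 : Tendsto (fun i ↦ 1 / ((c i : ℝ) + 1)) cofinite (𝓝 0) :=
    tendsto_one_div_add_atTop_nhds_zero_nat.comp (Nat.cofinite_eq_atTop ▸ hc.tendsto_cofinite)
  have hcη := hc0.eventually_lt_const hη
  have heη (i : ι) : ∀ᶠ n in cofinite, |e i n| < η :=
    Nat.cofinite_eq_atTop ▸ (he i).abs.eventually_lt_const (abs_zero.trans_lt hη)
  rw [eventually_cofinite] at hcη ⊢
  refine (hcη.biUnion fun i _ ↦ (eventually_cofinite.1 (heη i)).image (Prod.mk i)).subset ?_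
  rintro ⟨i, n⟩ hx
  have hTn : T i ≤ n := by
    by_contra hTn
    exact hx (by simpa [hTn] using hη)
  have hx : ¬ |e i n| < η := by simpa [hTn] using hx
  exact Set.mem_biUnion (fun hi ↦ hx ((hT i n hTn).trans hi)) (Set.mem_image_of_mem _ hx)

theorem exists_tendsto_zero_forall_eventually {ι : Type*} [Countable ι] {f : ι × ℕ → ℕ}
    (hf : f.Injective) {E : ι → ℕ → ℝ → Prop}
    (h : ∀ i, ∀ δ > 0, ∀ᶠ n in atTop, E i n δ) :
    ∃ ε : ℕ → ℝ, Tendsto ε atTop (𝓝 0) ∧ ∀ i, ∀ᶠ n in atTop, E i n (ε (f (i, n))) := by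
  choose e he hE using fun i ↦ exists_tendsto_zero_eventually (h i)
  obtain ⟨ε, hε, hεe⟩ := exists_tendsto_cofinite_zero he
  refine ⟨Function.extend f ε 0, Nat.cofinite_eq_atTop ▸ fun U hU ↦ ?_, fun i ↦ ?_⟩
  · refine ((mem_cofinite.1 (hε hU)).image f).subset fun m hm ↦ ?_
    by_cases hmf : ∃ x, f x = m
    · obtain ⟨x, rfl⟩ := hmf
      exact ⟨x, fun hx ↦ hm (by rwa [Set.mem_preimage, hf.extend_apply]), rfl⟩
    · refine absurd (mem_of_mem_nhds hU) fun h0 ↦ hm ?_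
      rwa [Set.mem_preimage, Function.extend_apply' _ _ _ hmf]
  · filter_upwards [hE i, hεe i] with n hn hεn
    rwa [hf.extend_apply, hεn]

theorem exists_tendsto_zero_forall_primes_eventually {E : Nat.Primes → ℕ → ℝ → Prop}
    (h : ∀ p, ∀ δ > 0, ∀ᶠ n in atTop, E p n δ) :
    ∃ ε : ℕ → ℝ, Tendsto ε atTop (𝓝 0) ∧ ∀ p, ∀ᶠ n in atTop, E p n (ε (p ^ n)) := by
  have hinj : (fun x : Nat.Primes × ℕ ↦ (x.1 : ℕ) ^ (x.2 + 1)).Injective := fun x y hxy ↦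
    Nat.Primes.prodNatEquiv.injective (Subtype.ext hxy)
  obtain ⟨ε, hε, hE⟩ := exists_tendsto_zero_forall_eventually hinj
    (E := fun p n ↦ E p (n + 1)) fun p δ hδ ↦ (tendsto_add_atTop_nat 1).eventually (h p δ hδ)
  refine ⟨ε, hε, fun p ↦ ?_⟩
  rw [← map_add_atTop_eq_nat 1]
  exact hE p

end Diagonal

theorem equidistributed_of_image_contains_noncentral_semisimple (w : FreeGroup (Fin 2))
    (hsurj : ∀ (p : ℕ) (hp : p.Prime),
      letI : Fact p.Prime := ⟨hp⟩
      ∃ n₀ : ℕ, ∀ n ≥ n₀, ∀ g : SL2 (GaloisField p n),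
        (Matrix.trace (g : Matrix (Fin 2) (Fin 2) (GaloisField p n)) ≠ 2 ∧
         Matrix.trace (g : Matrix (Fin 2) (Fin 2) (GaloisField p n)) ≠ -2) →
        g ∈ Set.range (wordMap w (GaloisField p n))) :
    IsEquidistributedFamily w := by
  have hequi (p : Nat.Primes) (δ : ℝ) (hδ : 0 < δ) : ∀ᶠ n in Filter.atTop,
      letI : Fact (p : ℕ).Prime := ⟨p.2⟩
      IsEquidistributed (wordMap w (GaloisField p n)) δ :=
    letI : Fact (p : ℕ).Prime := ⟨p.2⟩
    eventually_isEquidistributed_wordMap (Filter.eventually_atTop.2 (hsurj p p.2)) hδ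
  obtain ⟨ε, hε, hE⟩ := exists_tendsto_zero_forall_primes_eventually hequi
  exact ⟨ε, hε, fun p hp ↦ hE ⟨p, hp⟩⟩
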